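/- Let Ω ⊆ ℝ^n be an open set and s ∈ (0,1). A measurable set E ⊆ ℝ^n (normalized in its Lebesgue class so that its topological boundary ∂E equals its measure-theoretic boundary) has locally finite s-perimeter in Ω (i.e. P_s(E,Ω') < ∞ for every open Ω' ⊂⊂ Ω) if and only if there exist a sequence of open sets E_h ⊆ ℝ^n with smooth boundary and a sequence ε_h → 0⁺ such that: (i) E_h →loc E and sup_h P_s(E_h,Ω') < ∞ for every open Ω' ⊂⊂ Ω; (ii) lim_{h→∞} P_s(E_h,Ω') = P_s(E,Ω') for every open Ω' ⊂⊂ Ω; (iii) ∂E_h ⊆ N_{ε_h}(∂E). Moreover, if Ω = ℝ^n, |E| < ∞ and P_s(E) < ∞, then the sets E_h can be chosen bounded and such that |E_h Δ E| → 0 and P_s(E_h) → P_s(E). -/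

import Mathlib

open MeasureTheory Set Filter Topology Metric Bornology
open scoped ENNReal NNReal symmDiff

noncomputable def Ls (n : ℕ) (s : ℝ) (A B : Set (EuclideanSpace ℝ (Fin n))) : ℝ≥0∞ :=
  ∫⁻ x in A, ∫⁻ y in B, ENNReal.ofReal (dist x y ^ (-((n : ℝ) + s)))

noncomputable def Ps (n : ℕ) (s : ℝ) (E Ω : Set (EuclideanSpace ℝ (Fin n))) : ℝ≥0∞ :=
  Ls n s (E ∩ Ω) (Eᶜ ∩ Ω) + Ls n s (E ∩ Ω) (Eᶜ \ Ω) + Ls n s (E \ Ω) (Eᶜ ∩ Ω)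

def LocConv (n : ℕ) (A : ℕ → Set (EuclideanSpace ℝ (Fin n)))
    (B : Set (EuclideanSpace ℝ (Fin n))) : Prop :=
  ∀ K : Set (EuclideanSpace ℝ (Fin n)), IsBounded K →
    Tendsto (fun h => volume ((A h ∆ B) ∩ K)) atTop (𝓝 0)

def HasSmoothBoundary {n : ℕ} (E : Set (EuclideanSpace ℝ (Fin n))) : Prop :=
  ∃ (f : EuclideanSpace ℝ (Fin n) → ℝ) (t : ℝ), ContDiff ℝ (⊤ : ℕ∞) f ∧
    (∀ x, f x = t → fderiv ℝ f x ≠ 0) ∧ E = {x | t < f x}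

def mtBoundary {n : ℕ} (E : Set (EuclideanSpace ℝ (Fin n))) : Set (EuclideanSpace ℝ (Fin n)) :=
  {x | ∀ r > 0, 0 < volume (E ∩ Metric.ball x r) ∧
    volume (E ∩ Metric.ball x r) < volume (Metric.ball x r)}


/-- the ambient space -/
abbrev Sp (n : ℕ) := EuclideanSpace ℝ (Fin n)

/-- bounded diffeomorphism of the space onto its unit ball -/
noncomputable def thet (n : ℕ) : EuclideanSpace ℝ (Fin n) → EuclideanSpace ℝ (Fin n) :=
  fun x => OpenPartialHomeomorph.univUnitBall x

theorem thet_contDiff (n : ℕ) (k : ℕ∞) : ContDiff ℝ k (thet n) :=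
  OpenPartialHomeomorph.contDiff_univUnitBall

theorem thet_norm_le (n : ℕ) (x : EuclideanSpace ℝ (Fin n)) : ‖thet n x‖ ≤ 1 := by
  have : thet n x ∈ (OpenPartialHomeomorph.univUnitBall (E := EuclideanSpace ℝ (Fin n))).target :=
    OpenPartialHomeomorph.map_source _ (mem_univ x)
  have h2 : thet n x ∈ ball (0 : EuclideanSpace ℝ (Fin n)) 1 := this
  exact (mem_ball_zero_iff.1 h2).le

theorem sard_perturb (n : ℕ) (f : Sp n → ℝ)
    (hf : ContDiff ℝ (⊤ : ℕ∞) f) (δ : ℝ) (hδ : 0 < δ) :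
    ∃ a : Sp n, ‖a‖ < δ ∧
      {c : ℝ | ∃ x, f x + inner ℝ a (thet n x) = c ∧
        fderiv ℝ (fun x => f x + inner ℝ a (thet n x)) x = 0}.Countable := by
  set ψ : (Sp n) → (Sp n) := fun y => (OpenPartialHomeomorph.univUnitBall (E := (Sp n))).symm y with hψdef
  have hψ : ContDiffOn ℝ (⊤ : ℕ∞) ψ (ball (0 : (Sp n)) 1) :=
    OpenPartialHomeomorph.contDiffOn_univUnitBall_symm
  have hinv : ∀ x, ψ (thet n x) = x := fun x =>
    (OpenPartialHomeomorph.univUnitBall (E := (Sp n))).left_inv (mem_univ x)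
  have hinv2 : ∀ y ∈ ball (0 : (Sp n)) 1, thet n (ψ y) = y := fun y hy =>
    (OpenPartialHomeomorph.univUnitBall (E := (Sp n))).right_inv hy
  have hmem : ∀ x, thet n x ∈ ball (0 : (Sp n)) 1 := fun x =>
    (OpenPartialHomeomorph.univUnitBall (E := (Sp n))).map_source (mem_univ x)
  set F : (Sp n) → ℝ := fun y => f (ψ y) with hF
  have hFc : ContDiffOn ℝ (⊤ : ℕ∞) F (ball (0 : (Sp n)) 1) := hf.comp_contDiffOn hψ
  have hFat : ∀ y ∈ ball (0 : (Sp n)) 1, ContDiffAt ℝ (⊤ : ℕ∞) F y := fun y hy =>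
    hFc.contDiffAt (isOpen_ball.mem_nhds hy)
  set G : (Sp n) → (Sp n) := fun y => (InnerProductSpace.toDual ℝ (Sp n)).symm (fderiv ℝ F y) with hG
  have hGd : ∀ y ∈ ball (0 : (Sp n)) 1, DifferentiableAt ℝ G y := by
    intro y hy
    have h1 : ContDiffAt ℝ 1 (fderiv ℝ F) y := (hFat y hy).fderiv_right (by norm_cast)
    have h2 : DifferentiableAt ℝ (fderiv ℝ F) y := h1.differentiableAt (by norm_num)
    exact ((InnerProductSpace.toDual ℝ (Sp n)).symm.toContinuousLinearEquiv.differentiableAt).comp y h2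
  set S : Set (Sp n) := {y | y ∈ ball (0 : (Sp n)) 1 ∧ (fderiv ℝ G y).det = 0}
  have hnull : volume (G '' S) = 0 :=
    addHaar_image_eq_zero_of_det_fderivWithin_eq_zero volume (f' := fderiv ℝ G)
      (fun y hy => (hGd y hy.1).hasFDerivAt.hasFDerivWithinAt) (fun y hy => hy.2)
  obtain ⟨b, hb, hbS⟩ : ∃ b ∈ ball (0 : (Sp n)) δ, b ∉ G '' S := by
    by_contra! hcon
    have h1 : volume (ball (0 : (Sp n)) δ) ≤ volume (G '' S) := measure_mono hcon
    have h2 : 0 < volume (ball (0 : (Sp n)) δ) := measure_ball_pos _ _ hδ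
    rw [hnull] at h1
    exact absurd h1 (not_le.2 h2)
  refine ⟨-b, by simpa using hb, ?_⟩
  set Z : Set (Sp n) := {y | y ∈ ball (0 : (Sp n)) 1 ∧ G y = b}
  have hZ : Z.Countable := by
    apply (HereditarilyLindelofSpace.isLindelof Z).countable_of_isDiscrete
    rw [isDiscrete_iff_nhdsNE]
    intro y hy
    have hdet : (fderiv ℝ G y).det ≠ 0 := fun h => hbS ⟨y, ⟨hy.1, h⟩, hy.2⟩
    have h1 : ∀ᶠ z in 𝓝[≠] y, G z ≠ b := by
      apply (hGd y hy.1).hasFDerivAt.eventually_ne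
      refine ⟨_, ((fderiv ℝ G y).toContinuousLinearEquivOfDetNeZero hdet).antilipschitz⟩
    rw [inf_principal_eq_bot]
    filter_upwards [h1] with z hz hzZ
    exact hz hzZ.2
  refine (hZ.image (fun y => F y + inner ℝ (-b) y)).mono ?_
  rintro c ⟨x, hxc, hx⟩
  refine ⟨thet n x, ⟨hmem x, ?_⟩, ?_⟩
  · set y := thet n x with hy
    have hd : DifferentiableAt ℝ (fun x => f x + inner ℝ (-b) (thet n x)) x := by
      apply DifferentiableAt.add
      · exact hf.differentiable (by simp) x
      · exact (differentiableAt_const _).inner ℝ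
          ((thet_contDiff n 1).differentiable (by simp) x)
    have hψd : DifferentiableAt ℝ ψ y :=
      (hψ.contDiffAt (isOpen_ball.mem_nhds (hmem x))).differentiableAt (by simp)
    have hx' : HasFDerivAt (fun x => f x + inner ℝ (-b) (thet n x)) (0 : (Sp n) →L[ℝ] ℝ) (ψ y) := by
      rw [hinv x, ← hx]; exact hd.hasFDerivAt
    have h1 := hx'.comp y hψd.hasFDerivAt
    have h2 : HasFDerivAt (fun y => F y + inner ℝ (-b) y) (0 : (Sp n) →L[ℝ] ℝ) y := by
      have h3 := h1.congr_of_eventuallyEq (f₁ := fun y => F y + inner ℝ (-b) y) (by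
        filter_upwards [isOpen_ball.mem_nhds (hmem x)] with z hz
        simp [hF, hinv2 z hz])
      simpa using h3
    have h4 : HasFDerivAt F (fderiv ℝ F y) y :=
      ((hFat y (hmem x)).differentiableAt (by simp)).hasFDerivAt
    have h5 : HasFDerivAt (fun y => F y + inner ℝ (-b) y) (fderiv ℝ F y + innerSL ℝ (-b)) y :=
      h4.add ((innerSL ℝ (-b)).hasFDerivAt)
    have h6 := h5.unique h2
    have h7 : fderiv ℝ F y = InnerProductSpace.toDual ℝ (Sp n) b := by
      ext v
      have := congrArg (fun L : (Sp n) →L[ℝ] ℝ => L v) h6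
      simp at this
      simp
      linarith
    simp [hG, h7]
  · simp only [hF, hinv]; exact hxc

/-- the interaction kernel as a function on the product -/
noncomputable def kfun (n : ℕ) (s : ℝ) (p : Sp n × Sp n) : ℝ≥0∞ :=
  ENNReal.ofReal (dist p.1 p.2 ^ (-((n : ℝ) + s)))

theorem measurable_kfun (n : ℕ) (s : ℝ) : Measurable (kfun n s) := by
  unfold kfun
  exact ((measurable_fst.dist measurable_snd).pow_const _).ennreal_ofReal

/-- the kernel measure on the product -/
noncomputable def kap (n : ℕ) (s : ℝ) : Measure (Sp n × Sp n) :=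
  (volume : Measure (Sp n × Sp n)).withDensity (kfun n s)

instance (n : ℕ) (s : ℝ) : SFinite (kap n s) := by
  unfold kap; infer_instance

/-- pairs with at least one point in the set -/
def QQ {n : ℕ} (U : Set (Sp n)) : Set (Sp n × Sp n) := {p | p.1 ∈ U ∨ p.2 ∈ U}

theorem measurableSet_QQ {n : ℕ} {U : Set (Sp n)} (hU : MeasurableSet U) :
    MeasurableSet (QQ U) :=
  (measurable_fst hU).union (measurable_snd hU)

theorem QQ_mono {n : ℕ} {U V : Set (Sp n)} (h : U ⊆ V) : QQ U ⊆ QQ V :=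
  fun _ hp => hp.imp (fun x => h x) (fun x => h x)

theorem Ls_eq (n : ℕ) (s : ℝ) {A B : Set (Sp n)} (hA : MeasurableSet A) (hB : MeasurableSet B) :
    Ls n s A B = kap n s (A ×ˢ B) := by
  unfold kap
  rw [withDensity_apply _ (hA.prod hB), Measure.volume_eq_prod, ← Measure.prod_restrict,
    lintegral_prod _ (measurable_kfun n s).aemeasurable]
  rfl

theorem Ps_eq (n : ℕ) (s : ℝ) {E U : Set (Sp n)} (hE : MeasurableSet E) (hU : MeasurableSet U) :
    Ps n s E U = kap n s ((E ×ˢ Eᶜ) ∩ QQ U) := by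
  unfold Ps
  rw [Ls_eq n s (hE.inter hU) (hE.compl.inter hU), Ls_eq n s (hE.inter hU) (hE.compl.diff hU),
    Ls_eq n s (hE.diff hU) (hE.compl.inter hU), ← measure_union _ _, ← measure_union _ _]
  · congr 1
    ext p
    simp only [QQ, mem_union, mem_prod, mem_inter_iff, mem_diff, mem_compl_iff, mem_setOf_eq]
    tauto
  · rw [Set.disjoint_left]
    intro p
    simp only [mem_union, mem_prod, mem_inter_iff, mem_diff, mem_compl_iff]
    tauto
  · exact (hE.diff hU).prod (hE.compl.inter hU)
  · rw [Set.disjoint_left]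
    intro p
    simp only [mem_prod, mem_inter_iff, mem_diff, mem_compl_iff]
    tauto
  · exact (hE.inter hU).prod (hE.compl.diff hU)

/-- the fractional seminorm over a set of pairs -/
noncomputable def JJ {V : Type*} [NormedAddCommGroup V] (n : ℕ) (s : ℝ) (S : Set (Sp n × Sp n))
    (u : Sp n → V) : ℝ≥0∞ := ∫⁻ p in S, ‖u p.1 - u p.2‖ₑ ∂(kap n s)

theorem JJ_mono {V : Type*} [NormedAddCommGroup V] {n : ℕ} {s : ℝ} {S T : Set (Sp n × Sp n)}
    (h : S ⊆ T) (u : Sp n → V) : JJ n s S u ≤ JJ n s T u :=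
  lintegral_mono_set h

theorem kmin_lt_top (n : ℕ) (hn : 1 ≤ n) (s : ℝ) (hs : s ∈ Set.Ioo (0 : ℝ) 1) :
    ∫⁻ z : Sp n, ENNReal.ofReal (min 1 ‖z‖ * ‖z‖ ^ (-((n : ℝ) + s))) < ⊤ := by
  have : Nontrivial (Sp n) := by
    apply Module.nontrivial_of_finrank_pos (R := ℝ)
    rw [finrank_euclideanSpace_fin]; omega
  have key : IntegrableOn (fun y : ℝ => y ^ (Module.finrank ℝ (Sp n) - 1) •
      (min 1 y * y ^ (-((n : ℝ) + s)))) (Ioi 0) := by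
    rw [finrank_euclideanSpace_fin]
    have hc : ((n - 1 : ℕ) : ℝ) = (n : ℝ) - 1 := by push_cast [hn]; ring
    rw [← Ioc_union_Ioi_eq_Ioi (zero_le_one' ℝ)]
    apply IntegrableOn.union
    · have h1 : IntegrableOn (fun y : ℝ => y ^ (-s)) (Ioc 0 1) := by
        rw [integrableOn_Ioc_iff_integrableOn_Ioo,
          intervalIntegral.integrableOn_Ioo_rpow_iff one_pos]
        linarith [hs.2]
      refine h1.congr_fun ?_ measurableSet_Ioc
      intro y hy
      simp only [smul_eq_mul, min_eq_right hy.2]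
      rw [← Real.rpow_natCast y (n-1), hc]
      nth_rewrite 3 [← Real.rpow_one y]
      rw [← Real.rpow_add hy.1, ← Real.rpow_add hy.1]
      congr 1; ring
    · have h1 : IntegrableOn (fun y : ℝ => y ^ (-1-s)) (Ioi 1) :=
        integrableOn_Ioi_rpow_of_lt (by linarith [hs.1]) one_pos
      refine h1.congr_fun ?_ measurableSet_Ioi
      intro y hy
      have hy' : (1:ℝ) < y := hy
      simp only [smul_eq_mul, min_eq_left hy'.le, one_mul]
      rw [← Real.rpow_natCast y (n-1), hc, ← Real.rpow_add (by linarith)]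
      congr 1; ring
  have h := (integrable_fun_norm_addHaar (volume : Measure (Sp n))
    (f := fun y : ℝ => min 1 y * y ^ (-((n : ℝ) + s)))).2 key
  exact h.lintegral_lt_top

theorem JJ_add_le {V : Type*} [NormedAddCommGroup V] [MeasurableSpace V] [BorelSpace V]
    [SecondCountableTopology V]
    {n : ℕ} {s : ℝ} {S : Set (Sp n × Sp n)} {u w : Sp n → V} (hu : Measurable u) :
    JJ n s S (fun x => u x + w x) ≤ JJ n s S u + JJ n s S w := by
  unfold JJ
  rw [← lintegral_add_left]
  · apply lintegral_mono
    intro p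
    have : u p.1 + w p.1 - (u p.2 + w p.2) = (u p.1 - u p.2) + (w p.1 - w p.2) := by abel
    simp only [this]
    exact enorm_add_le _ _
  · exact ((hu.comp measurable_fst).sub (hu.comp measurable_snd)).enorm

theorem JJ_le_mul {V W : Type*} [NormedAddCommGroup V] [NormedAddCommGroup W]
    {n : ℕ} {s : ℝ} {S : Set (Sp n × Sp n)} {u : Sp n → V} {w : Sp n → W} {c : ℝ≥0}
    (h : ∀ x y, ‖u x - u y‖ ≤ c * ‖w x - w y‖) : JJ n s S u ≤ c * JJ n s S w := by
  unfold JJ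
  rw [← lintegral_const_mul' _ _ ENNReal.coe_ne_top]
  apply lintegral_mono
  intro p
  simp only
  rw [← ofReal_norm, ← ofReal_norm, ← ENNReal.ofReal_coe_nnreal, ← ENNReal.ofReal_mul c.coe_nonneg]
  exact ENNReal.ofReal_le_ofReal (h _ _)

theorem measurable_min_dist (n : ℕ) :
    Measurable (fun p : Sp n × Sp n => ENNReal.ofReal (min 1 (dist p.1 p.2))) :=
  (measurable_const.min (measurable_fst.dist measurable_snd)).ennreal_ofReal

theorem kap_min_fst (n : ℕ) (hn : 1 ≤ n) (s : ℝ) (hs : s ∈ Set.Ioo (0 : ℝ) 1) {A : Set (Sp n)}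
    (hA : MeasurableSet A) (hfin : volume A < ⊤) :
    ∫⁻ p in A ×ˢ univ, ENNReal.ofReal (min 1 (dist p.1 p.2)) ∂(kap n s) < ⊤ := by
  unfold kap
  rw [setLIntegral_withDensity_eq_setLIntegral_mul _ (measurable_kfun n s)
    (measurable_min_dist n) (hA.prod MeasurableSet.univ)]
  rw [Measure.volume_eq_prod, ← Measure.prod_restrict,
    lintegral_prod _ (((measurable_kfun n s).mul (measurable_min_dist n)).aemeasurable)]
  have : ∀ x : Sp n, ∫⁻ y in univ, (kfun n s * fun p : Sp n × Sp n =>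
      ENNReal.ofReal (min 1 (dist p.1 p.2))) (x, y) =
      ∫⁻ z : Sp n, ENNReal.ofReal (min 1 ‖z‖ * ‖z‖ ^ (-((n : ℝ) + s))) := by
    intro x
    rw [Measure.restrict_univ, ← lintegral_sub_left_eq_self _ x]
    apply lintegral_congr
    intro y
    simp only [kfun, Pi.mul_apply]
    rw [← ENNReal.ofReal_mul (by positivity), dist_eq_norm, mul_comm, sub_sub_cancel]
  simp_rw [this]
  rw [lintegral_const, Measure.restrict_apply MeasurableSet.univ, univ_inter]
  exact ENNReal.mul_lt_top (kmin_lt_top n hn s hs) hfin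

theorem kap_swap (n : ℕ) (s : ℝ) : MeasurePreserving Prod.swap (kap n s) (kap n s) := by
  refine ⟨measurable_swap, ?_⟩
  ext S hS
  unfold kap
  rw [Measure.map_apply measurable_swap hS, withDensity_apply _ hS,
    withDensity_apply _ (measurable_swap hS)]
  have hm : MeasurePreserving (Prod.swap : Sp n × Sp n → Sp n × Sp n) volume volume :=
    Measure.measurePreserving_swap
  rw [← hm.setLIntegral_comp_preimage hS (measurable_kfun n s)]
  apply lintegral_congr
  intro p
  simp [kfun, dist_comm]

theorem kap_min_snd (n : ℕ) (hn : 1 ≤ n) (s : ℝ) (hs : s ∈ Set.Ioo (0 : ℝ) 1) {A : Set (Sp n)}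
    (hA : MeasurableSet A) (hfin : volume A < ⊤) :
    ∫⁻ p in univ ×ˢ A, ENNReal.ofReal (min 1 (dist p.1 p.2)) ∂(kap n s) < ⊤ := by
  have h := kap_min_fst n hn s hs hA hfin
  rw [← (kap_swap n s).setLIntegral_comp_preimage (hA.prod MeasurableSet.univ)
    (measurable_min_dist n)] at h
  convert h using 2
  · congr 1
    ext p; simp
  · ext p; simp [dist_comm]

theorem JJ_ball_lt_top {V : Type*} [NormedAddCommGroup V] [NormedSpace ℝ V]
    (n : ℕ) (hn : 1 ≤ n) (s : ℝ) (hs : s ∈ Set.Ioo (0 : ℝ) 1)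
    {w : Sp n → V} (hw : ContDiff ℝ 1 w) {M : ℝ} (hM : ∀ x, ‖w x‖ ≤ M) (R : ℝ) :
    JJ n s (QQ (ball 0 R)) w < ⊤ := by
  obtain ⟨K, hK⟩ := (hw.contDiffOn (s := closedBall (0 : Sp n) (R+1))).exists_lipschitzOnWith
    (by simp) (convex_closedBall _ _) (isCompact_closedBall _ _)
  have hM0 : 0 ≤ M := (norm_nonneg _).trans (hM 0)
  set L : ℝ := max K (2 * M) with hL
  have hL0 : 0 ≤ L := le_max_of_le_left K.coe_nonneg
  have hb : ∀ p ∈ QQ (ball (0 : Sp n) R), ‖w p.1 - w p.2‖ₑ ≤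
      ENNReal.ofReal L * ENNReal.ofReal (min 1 (dist p.1 p.2)) := by
    intro p hp
    rw [← ofReal_norm, ← ENNReal.ofReal_mul hL0]
    apply ENNReal.ofReal_le_ofReal
    rcases le_total (dist p.1 p.2) 1 with h | h
    · rw [min_eq_right h]
      have h1 : p.1 ∈ closedBall (0 : Sp n) (R+1) ∧ p.2 ∈ closedBall (0 : Sp n) (R+1) := by
        have t1 := dist_triangle p.1 p.2 0
        have t2 := dist_triangle p.2 p.1 0
        rw [dist_comm p.2 p.1] at t2
        rcases hp with hp | hp <;> rw [mem_ball] at hp <;> constructor <;> rw [mem_closedBall] <;>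
          linarith
      rw [← dist_eq_norm]
      refine (hK.dist_le_mul _ h1.1 _ h1.2).trans ?_
      gcongr
      exact le_max_left _ _
    · rw [min_eq_left h, mul_one]
      refine (norm_sub_le _ _).trans ?_
      refine le_trans ?_ (le_max_right _ _)
      linarith [hM p.1, hM p.2]
  have hmeas : MeasurableSet (QQ (ball (0 : Sp n) R)) := measurableSet_QQ measurableSet_ball
  have hsub : QQ (ball (0 : Sp n) R) = (ball 0 R ×ˢ univ) ∪ (univ ×ˢ ball 0 R) := by
    ext p; simp [QQ]
  calc JJ n s (QQ (ball 0 R)) w ≤ ∫⁻ p in QQ (ball (0 : Sp n) R),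
        ENNReal.ofReal L * ENNReal.ofReal (min 1 (dist p.1 p.2)) ∂(kap n s) :=
        setLIntegral_mono' hmeas hb
    _ = ENNReal.ofReal L * ∫⁻ p in QQ (ball (0 : Sp n) R),
        ENNReal.ofReal (min 1 (dist p.1 p.2)) ∂(kap n s) :=
        lintegral_const_mul _ (measurable_min_dist n)
    _ < ⊤ := by
      apply ENNReal.mul_lt_top ENNReal.ofReal_lt_top
      rw [hsub]
      refine (lintegral_union_le _ _ _).trans_lt ?_
      exact ENNReal.add_lt_top.2 ⟨kap_min_fst n hn s hs measurableSet_ball measure_ball_lt_top,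
        kap_min_snd n hn s hs measurableSet_ball measure_ball_lt_top⟩

theorem layer_le {Y : Type*} [MeasurableSpace Y] (ν : Measure Y) [SFinite ν] (Λ : Measure ℝ)
    [SFinite Λ] {A : Set (ℝ × Y)} (hA : MeasurableSet A) {φ : Y → ℝ≥0∞}
    (h : ∀ y, Λ {t | (t, y) ∈ A} ≤ φ y) :
    Measurable (fun t => ν {y | (t, y) ∈ A}) ∧ ∫⁻ t, ν {y | (t, y) ∈ A} ∂Λ ≤ ∫⁻ y, φ y ∂ν := by
  refine ⟨measurable_measure_prodMk_left hA, ?_⟩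
  have h1 : ∫⁻ t, ν {y | (t, y) ∈ A} ∂Λ = (Λ.prod ν) A := (Measure.prod_apply hA).symm
  rw [h1, Measure.prod_apply_symm hA]
  exact lintegral_mono h

theorem vol_quarter : (volume.restrict (Ioo (1/4 : ℝ) (3/4))) univ = 2⁻¹ := by
  rw [Measure.restrict_apply MeasurableSet.univ, univ_inter, Real.volume_Ioo]
  rw [show (3/4 - 1/4 : ℝ) = 2⁻¹ by norm_num, ENNReal.ofReal_inv_of_pos two_pos]
  simp

theorem level_pair {a b : ℝ} (ha1 : a ≤ 1) (hb0 : 0 ≤ b)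
    {P Q : Prop} [Decidable P] [Decidable Q] :
    (volume.restrict (Ioo (1/4 : ℝ) (3/4)))
      {t : ℝ | ¬ ((t < a ∧ ¬ t < b) ↔ (P ∧ ¬ Q))} ≤
      ‖(a - if P then (1 : ℝ) else 0) - (b - if Q then (1 : ℝ) else 0)‖ₑ := by
  rw [Measure.restrict_apply' measurableSet_Ioo, ← ofReal_norm, Real.norm_eq_abs]
  by_cases hPQ : P ∧ ¬ Q
  · have hsub : {t : ℝ | ¬ ((t < a ∧ ¬ t < b) ↔ (P ∧ ¬ Q))} ∩ Ioo (1/4 : ℝ) (3/4) ⊆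
        Ico a 1 ∪ Ioo 0 b := by
      rintro t ⟨ht, ht1, ht2⟩
      simp only [hPQ, mem_ofPred_eq, not_false_eq_true, and_self, iff_true, not_and, not_not] at ht
      by_cases h : t < a
      · right; exact ⟨by linarith, ht h⟩
      · left; exact ⟨not_lt.1 h, by linarith⟩
    refine (measure_mono hsub).trans ((measure_union_le _ _).trans ?_)
    rw [Real.volume_Ico, Real.volume_Ioo, ← ENNReal.ofReal_add (by linarith) (by linarith)]
    apply ENNReal.ofReal_le_ofReal
    simp only [hPQ.1, hPQ.2, if_true, if_false]
    rw [abs_sub_comm]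
    refine le_trans ?_ (le_abs_self _)
    linarith
  · have hsub : {t : ℝ | ¬ ((t < a ∧ ¬ t < b) ↔ (P ∧ ¬ Q))} ∩ Ioo (1/4 : ℝ) (3/4) ⊆ Ico b a := by
      rintro t ⟨ht, -⟩
      simp only [hPQ, mem_ofPred_eq, iff_false, not_not] at ht
      exact ⟨not_lt.1 ht.2, ht.1⟩
    refine (measure_mono hsub).trans ?_
    rw [Real.volume_Ico]
    apply ENNReal.ofReal_le_ofReal
    by_cases hP : P <;> by_cases hQ : Q <;> simp only [hP, hQ, if_true, if_false] at hPQ ⊢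
    · refine le_trans ?_ (le_abs_self _); linarith
    · simp at hPQ
    · refine le_trans ?_ (le_abs_self _); linarith
    · refine le_trans ?_ (le_abs_self _); linarith

theorem level_single {a : ℝ} (ha1 : a ≤ 1) {P : Prop} [Decidable P] :
    (volume.restrict (Ioo (1/4 : ℝ) (3/4))) {t : ℝ | ¬ (t < a ↔ P)} ≤
      ‖(a - if P then (1 : ℝ) else 0)‖ₑ := by
  have h := level_pair ha1 le_rfl (P := P) (Q := False)
  simp only [if_false, sub_zero, not_false_eq_true, and_true] at h
  refine le_trans ?_ h
  rw [Measure.restrict_apply' measurableSet_Ioo, Measure.restrict_apply' measurableSet_Ioo]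
  apply measure_mono
  rintro t ⟨ht, ht1, ht2⟩
  refine ⟨?_, ht1, ht2⟩
  have : ¬ t < 0 := by linarith
  simpa only [mem_ofPred_eq, this, not_false_eq_true, and_true] using ht

theorem symm_prod_eq {X : Type*} (g : X → ℝ) (t : ℝ) (E : Set X) :
    (({x | t < g x} ×ˢ {x | t < g x}ᶜ) ∆ (E ×ˢ Eᶜ)) =
      {p : X × X | ¬ ((t < g p.1 ∧ ¬ t < g p.2) ↔ (p.1 ∈ E ∧ ¬ p.2 ∈ E))} := by
  ext p
  simp only [mem_symmDiff, mem_ofPred_eq, mem_prod, mem_compl_iff]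
  tauto

theorem symm_single_eq {X : Type*} (g : X → ℝ) (t : ℝ) (E : Set X) :
    ({x | t < g x} ∆ E) = {x | ¬ (t < g x ↔ x ∈ E)} := by
  ext p
  simp only [mem_symmDiff, mem_ofPred_eq]
  tauto

open Classical in
set_option maxHeartbeats 1000000 in
theorem select_level (n : ℕ) (s : ℝ) {g : Sp n → ℝ} (hg : Measurable g) (h0 : ∀ x, 0 ≤ g x)
    (h1 : ∀ x, g x ≤ 1) {E : Set (Sp n)} (hE : MeasurableSet E) {S : Set (Sp n × Sp n)}
    (hS : MeasurableSet S) {B : Set (Sp n)} (hB : MeasurableSet B) {τ : ℝ≥0∞}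
    (hτ : JJ n s S (fun x => g x - if x ∈ E then (1 : ℝ) else 0) +
      ∫⁻ x in B, ‖g x - if x ∈ E then (1 : ℝ) else 0‖ₑ < τ * 2⁻¹)
    (hfin : ∀ j : ℕ, JJ n s (QQ (ball 0 j)) g < ⊤) {N : Set ℝ} (hN : N.Countable) :
    ∃ t ∈ Ioo (1/4 : ℝ) (3/4), t ∉ N ∧
      kap n s ((({x | t < g x} ×ˢ {x | t < g x}ᶜ) ∆ (E ×ˢ Eᶜ)) ∩ S) +
        volume (({x | t < g x} ∆ E) ∩ B) < τ ∧
      ∀ j : ℕ, kap n s (({x | t < g x} ×ˢ {x | t < g x}ᶜ) ∩ QQ (ball 0 j)) < ⊤ := by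
  set Λ : Measure ℝ := volume.restrict (Ioo (1/4 : ℝ) (3/4)) with hΛ
  -- pairs
  have hm1 : MeasurableSet {q : ℝ × (Sp n × Sp n) | q.1 < g q.2.1} :=
    measurableSet_lt measurable_fst (hg.comp (measurable_fst.comp measurable_snd))
  have hm2 : MeasurableSet {q : ℝ × (Sp n × Sp n) | q.1 < g q.2.2} :=
    measurableSet_lt measurable_fst (hg.comp (measurable_snd.comp measurable_snd))
  have hm3 : MeasurableSet {q : ℝ × (Sp n × Sp n) | q.2.1 ∈ E} :=
    (measurable_fst.comp measurable_snd) hE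
  have hm4 : MeasurableSet {q : ℝ × (Sp n × Sp n) | q.2.2 ∈ E} :=
    (measurable_snd.comp measurable_snd) hE
  have hA1 : MeasurableSet {q : ℝ × (Sp n × Sp n) |
      ¬ ((q.1 < g q.2.1 ∧ ¬ q.1 < g q.2.2) ↔ (q.2.1 ∈ E ∧ ¬ q.2.2 ∈ E))} := by
    have : {q : ℝ × (Sp n × Sp n) |
      ¬ ((q.1 < g q.2.1 ∧ ¬ q.1 < g q.2.2) ↔ (q.2.1 ∈ E ∧ ¬ q.2.2 ∈ E))} =
      ({q : ℝ × (Sp n × Sp n) | q.1 < g q.2.1} ∩ {q : ℝ × (Sp n × Sp n) | q.1 < g q.2.2}ᶜ) ∆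
      ({q : ℝ × (Sp n × Sp n) | q.2.1 ∈ E} ∩ {q : ℝ × (Sp n × Sp n) | q.2.2 ∈ E}ᶜ) := by
      ext q
      simp only [mem_symmDiff, mem_ofPred_eq, mem_inter_iff, mem_compl_iff]
      tauto
    rw [this]
    exact (hm1.inter hm2.compl).symmDiff (hm3.inter hm4.compl)
  obtain ⟨mA, iA⟩ := layer_le ((kap n s).restrict S) Λ hA1
    (fun p => level_pair (h1 p.1) (h0 p.2) (P := p.1 ∈ E) (Q := p.2 ∈ E))
  -- single
  have hA2 : MeasurableSet {q : ℝ × Sp n | ¬ (q.1 < g q.2 ↔ q.2 ∈ E)} := by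
    have : {q : ℝ × Sp n | ¬ (q.1 < g q.2 ↔ q.2 ∈ E)} =
      {q : ℝ × Sp n | q.1 < g q.2} ∆ {q : ℝ × Sp n | q.2 ∈ E} := by
      ext q
      simp only [mem_symmDiff, mem_ofPred_eq]
      tauto
    rw [this]
    exact (measurableSet_lt measurable_fst (hg.comp measurable_snd)).symmDiff (measurable_snd hE)
  obtain ⟨mB, iB⟩ := layer_le ((volume : Measure (Sp n)).restrict B) Λ hA2
    (fun x => level_single (h1 x) (P := x ∈ E))
  -- finiteness
  have hC : ∀ j : ℕ, ∀ᵐ t ∂Λ,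
      ((kap n s).restrict (QQ (ball 0 j))) {p | t < g p.1 ∧ ¬ t < g p.2} < ⊤ := by
    intro j
    obtain ⟨mC, iC⟩ := layer_le ((kap n s).restrict (QQ (ball 0 j))) Λ (hm1.inter hm2.compl)
      (φ := fun p => ‖g p.1 - g p.2‖ₑ)
      (fun p => by
        have := level_pair (h1 p.1) (h0 p.2) (P := False) (Q := False)
        simp only [if_false, sub_zero, false_and, iff_false, not_not] at this
        exact this)
    exact ae_lt_top mC (iC.trans_lt (hfin j)).ne
  have hNΛ : ∀ᵐ t ∂Λ, t ∉ N := by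
    have h3 : volume N = 0 := hN.measure_zero _
    have : ∀ᵐ t : ℝ, t ∉ N := by
      rw [ae_iff]; simpa using h3
    exact ae_restrict_of_ae this
  have hI : ∀ᵐ t ∂Λ, t ∈ Ioo (1/4 : ℝ) (3/4) := ae_restrict_mem measurableSet_Ioo
  by_contra hcon
  push Not at hcon
  have hge : ∀ᵐ t ∂Λ, τ ≤ ((kap n s).restrict S) {p | (t, p) ∈ {q : ℝ × (Sp n × Sp n) |
      ¬ ((q.1 < g q.2.1 ∧ ¬ q.1 < g q.2.2) ↔ (q.2.1 ∈ E ∧ ¬ q.2.2 ∈ E))}} +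
      ((volume : Measure (Sp n)).restrict B)
        {x | (t, x) ∈ {q : ℝ × Sp n | ¬ (q.1 < g q.2 ↔ q.2 ∈ E)}} := by
    filter_upwards [hNΛ, hI, ae_all_iff.2 hC] with t htN htI htC
    by_contra hlt
    rw [not_le] at hlt
    have hlt' : kap n s ((({x | t < g x} ×ˢ {x | t < g x}ᶜ) ∆ (E ×ˢ Eᶜ)) ∩ S) +
        volume (({x | t < g x} ∆ E) ∩ B) < τ := by
      rw [Measure.restrict_apply' hS, Measure.restrict_apply' hB] at hlt
      rw [symm_prod_eq, symm_single_eq]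
      exact hlt
    obtain ⟨j, hj⟩ := hcon t htI htN hlt'
    have h5 := htC j
    rw [Measure.restrict_apply' (measurableSet_QQ measurableSet_ball)] at h5
    have h6 : ({x | t < g x} ×ˢ {x | t < g x}ᶜ) ∩ QQ (ball (0 : Sp n) j) =
      {p | t < g p.1 ∧ ¬ t < g p.2} ∩ QQ (ball (0 : Sp n) j) := by
      ext p; simp
    rw [h6] at hj
    exact absurd h5 (not_lt.2 hj)
  have h7 := lintegral_mono_ae hge
  rw [lintegral_const, vol_quarter, lintegral_add_left mA] at h7
  exact absurd (h7.trans (add_le_add iA iB)) (not_le.2 hτ)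

theorem translate_tendsto {G : Type*} [NormedAddCommGroup G] [MeasurableSpace G] [BorelSpace G]
    [SecondCountableTopology G] (μ : Measure G) [μ.IsAddLeftInvariant]
    [IsLocallyFiniteMeasure μ] [μ.InnerRegularCompactLTTop] {h : G → ℝ} (hh : Integrable h μ) :
    Tendsto (fun z : G => ∫⁻ x, ‖h (z + x) - h x‖ₑ ∂μ) (𝓝 0) (𝓝 0) := by
  haveI : Fact ((1 : ℝ≥0∞) ≠ ∞) := ⟨by simp⟩
  have hm : MemLp h 1 μ := memLp_one_iff_integrable.2 hh
  have hc : Continuous (fun z : G => (DomAddAct.mk z +ᵥ hm.toLp h : Lp ℝ 1 μ)) :=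
    (DomAddAct.continuous_mk).vadd continuous_const
  have h1 : Tendsto (fun z : G => edist (DomAddAct.mk z +ᵥ hm.toLp h : Lp ℝ 1 μ) (hm.toLp h))
      (𝓝 0) (𝓝 0) := by
    have h2 := hc.tendsto 0
    rw [tendsto_iff_edist_tendsto_0] at h2
    simpa using h2
  refine h1.congr ?_
  intro z
  rw [DomAddAct.mk_vadd_toLp, Lp.edist_toLp_toLp, eLpNorm_one_eq_lintegral_enorm]
  rfl

theorem tr_JJ (n : ℕ) (s : ℝ) {v : Sp n → ℝ} (hv : Measurable v) {C U : Set (Sp n)}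
    (hC : MeasurableSet C) (hU : MeasurableSet U) {r : ℝ} (hr : 0 < r)
    (hCU : ∀ x ∈ C, ∀ z, ‖z‖ < r → x - z ∈ U) (hfin : JJ n s (QQ U) v < ⊤)
    {τ : ℝ≥0∞} (hτ : 0 < τ) :
    ∃ δ > 0, ∀ z : Sp n, ‖z‖ < δ →
      ∫⁻ p in QQ C, ‖(v (p.1 - z) - v (p.2 - z)) - (v p.1 - v p.2)‖ₑ ∂(kap n s) ≤ τ := by
  set H : Sp n × Sp n → ℝ := (QQ U).indicator
    (fun p => (v p.1 - v p.2) * dist p.1 p.2 ^ (-((n : ℝ) + s))) with hH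
  have hv2 : Measurable (fun p : Sp n × Sp n => v p.1 - v p.2) :=
    (hv.comp measurable_fst).sub (hv.comp measurable_snd)
  have hk : Measurable (fun p : Sp n × Sp n => dist p.1 p.2 ^ (-((n : ℝ) + s))) :=
    (measurable_fst.dist measurable_snd).pow_const _
  have hHm : Measurable H := (hv2.mul hk).indicator (measurableSet_QQ hU)
  have hHi : Integrable H (volume : Measure (Sp n × Sp n)) := by
    refine ⟨hHm.aestronglyMeasurable, ?_⟩
    rw [hasFiniteIntegral_iff_enorm]
    refine lt_of_eq_of_lt ?_ hfin
    unfold JJ kap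
    rw [setLIntegral_withDensity_eq_setLIntegral_mul _ (measurable_kfun n s)
      hv2.enorm (measurableSet_QQ hU), ← lintegral_indicator (measurableSet_QQ hU)]
    apply lintegral_congr
    intro p
    rw [hH, enorm_indicator_eq_indicator_enorm]
    congr 1
    ext p
    simp only [Pi.mul_apply, kfun]
    rw [enorm_mul, mul_comm, Real.enorm_eq_ofReal (by positivity)]
  have : (volume : Measure (Sp n × Sp n)).IsAddLeftInvariant := by
    rw [Measure.volume_eq_prod]; infer_instance
  have ht := translate_tendsto (volume : Measure (Sp n × Sp n)) hHi
  have ht2 : Tendsto (fun z : Sp n => ((-z, -z) : Sp n × Sp n)) (𝓝 0) (𝓝 0) := by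
    have : Continuous (fun z : Sp n => ((-z, -z) : Sp n × Sp n)) := by fun_prop
    simpa [← Prod.zero_eq_mk] using this.tendsto 0
  have ht3 := (ht.comp ht2).eventually (gt_mem_nhds hτ)
  obtain ⟨δ, hδ, hball⟩ := Metric.eventually_nhds_iff.1 ht3
  refine ⟨min δ r, lt_min hδ hr, ?_⟩
  intro z hz
  have h1 := hball (y := z) (by rw [dist_zero_right]; exact hz.trans_le (min_le_left _ _))
  refine le_trans ?_ h1.le
  have hm4 : Measurable (fun p : Sp n × Sp n =>
      ‖(v (p.1 - z) - v (p.2 - z)) - (v p.1 - v p.2)‖ₑ) := by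
    refine Measurable.enorm (Measurable.sub ?_ hv2)
    exact (hv.comp (measurable_fst.sub_const z)).sub (hv.comp (measurable_snd.sub_const z))
  unfold kap
  rw [setLIntegral_withDensity_eq_setLIntegral_mul _ (measurable_kfun n s) hm4
    (measurableSet_QQ hC)]
  refine le_trans ?_ (setLIntegral_le_lintegral (QQ C) _)
  apply setLIntegral_mono' (measurableSet_QQ hC)
  intro p hp
  have hp1 : p ∈ QQ U := by
    rcases hp with hp | hp
    · left; simpa using hCU _ hp 0 (by simpa using hr)
    · right; simpa using hCU _ hp 0 (by simpa using hr)
  have hp2 : ((-z, -z) : Sp n × Sp n) + p ∈ QQ U := by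
    have hzr : ‖z‖ < r := hz.trans_le (min_le_right _ _)
    rcases hp with hp | hp
    · left; have := hCU _ hp z hzr
      simpa [sub_eq_neg_add] using this
    · right; have := hCU _ hp z hzr
      simpa [sub_eq_neg_add] using this
  simp only [hH, indicator_of_mem hp1, indicator_of_mem hp2, Pi.mul_apply, kfun]
  simp only [Prod.fst_add, Prod.snd_add, dist_add_left, ← sub_mul, enorm_mul]
  rw [mul_comm, ← Real.enorm_eq_ofReal (by positivity)]
  simp only [sub_eq_neg_add, le_refl]

theorem tr_L1 (n : ℕ) {v : Sp n → ℝ} (hv : Measurable v) (h0 : ∀ x, 0 ≤ v x)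
    (h1 : ∀ x, v x ≤ 1) {B : Set (Sp n)} (hB : IsBounded B) (hBm : MeasurableSet B)
    {τ : ℝ≥0∞} (hτ : 0 < τ) :
    ∃ δ > 0, ∀ z : Sp n, ‖z‖ < δ → ∫⁻ x in B, ‖v (x - z) - v x‖ₑ ≤ τ := by
  obtain ⟨R, hR⟩ := hB.subset_ball (0 : Sp n)
  set H : Sp n → ℝ := (ball (0 : Sp n) (R + 1)).indicator v with hH
  have hHi : Integrable H (volume : Measure (Sp n)) := by
    rw [hH, integrable_indicator_iff measurableSet_ball]
    apply Measure.integrableOn_of_bounded (M := 1) measure_ball_lt_top.ne hv.aestronglyMeasurable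
    filter_upwards with x
    rw [Real.norm_eq_abs, abs_of_nonneg (h0 x)]; exact h1 x
  have ht := translate_tendsto (volume : Measure (Sp n)) hHi
  have ht2 : Tendsto (fun z : Sp n => -z) (𝓝 0) (𝓝 0) := by
    simpa using (continuous_neg (G := Sp n)).tendsto 0
  have ht3 := (ht.comp ht2).eventually (gt_mem_nhds hτ)
  obtain ⟨δ, hδ, hball⟩ := Metric.eventually_nhds_iff.1 ht3
  refine ⟨min δ 1, lt_min hδ one_pos, ?_⟩
  intro z hz
  have h1 := hball (y := z) (by rw [dist_zero_right]; exact hz.trans_le (min_le_left _ _))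
  refine le_trans ?_ h1.le
  refine le_trans ?_ (setLIntegral_le_lintegral B _)
  apply setLIntegral_mono' hBm
  intro x hx
  have hx1 := hR hx
  rw [mem_ball_zero_iff] at hx1
  have hx2 : x ∈ ball (0 : Sp n) (R + 1) := by rw [mem_ball_zero_iff]; linarith
  have hx3 : -z + x ∈ ball (0 : Sp n) (R + 1) := by
    rw [mem_ball_zero_iff]
    have := norm_add_le (-z) x
    rw [norm_neg] at this
    linarith [hz.trans_le (min_le_right _ _)]
  simp only [hH, indicator_of_mem hx2, indicator_of_mem hx3]
  simp only [sub_eq_neg_add, le_refl]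

theorem average_le {n : ℕ} {Y : Type*} [MeasurableSpace Y] (ν : Measure Y) [SFinite ν]
    {η : Sp n → ℝ} (hη : Measurable η) (hη0 : ∀ z, 0 ≤ η z) (hηi : Integrable η)
    (hη1 : ∫ z, η z = 1) {ε : ℝ} (hsupp : ∀ z, η z ≠ 0 → ‖z‖ < ε)
    {w : Sp n → Y → ℝ} (hw : Measurable (Function.uncurry w)) {τ : ℝ≥0∞}
    (h : ∀ z, ‖z‖ < ε → ∫⁻ y, ‖w z y‖ₑ ∂ν ≤ τ) :
    ∫⁻ y, ‖∫ z, η z * w z y‖ₑ ∂ν ≤ τ := by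
  have hm : Measurable (fun q : Y × Sp n => ‖η q.2 * w q.2 q.1‖ₑ) :=
    ((hη.comp measurable_snd).mul (hw.comp measurable_swap)).enorm
  calc ∫⁻ y, ‖∫ z, η z * w z y‖ₑ ∂ν ≤ ∫⁻ y, (∫⁻ z, ‖η z * w z y‖ₑ) ∂ν :=
        lintegral_mono fun y => enorm_integral_le_lintegral_enorm _
    _ = ∫⁻ z, ∫⁻ y, ‖η z * w z y‖ₑ ∂ν := lintegral_lintegral_swap hm.aemeasurable
    _ ≤ ∫⁻ z, ENNReal.ofReal (η z) * τ := by
        apply lintegral_mono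
        intro z
        simp only [enorm_mul]
        rw [lintegral_const_mul]
        · rw [Real.enorm_eq_ofReal (hη0 z)]
          by_cases hz : η z = 0
          · simp [hz]
          · gcongr
            exact h z (hsupp z hz)
        · exact (hw.comp measurable_prodMk_left).enorm
    _ = τ := by
        rw [lintegral_mul_const _ hη.ennreal_ofReal,
          ← ofReal_integral_eq_lintegral_ofReal hηi (Eventually.of_forall hη0), hη1]
        simp

theorem mollify (n : ℕ) (s : ℝ) {v : Sp n → ℝ} (hv : Measurable v) (h0 : ∀ x, 0 ≤ v x)
    (h1 : ∀ x, v x ≤ 1) {C U : Set (Sp n)}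
    (hC : MeasurableSet C) (hU : MeasurableSet U) {r : ℝ} (hr : 0 < r)
    (hCU : ∀ x ∈ C, ∀ z, ‖z‖ < r → x - z ∈ U) (hfin : JJ n s (QQ U) v < ⊤)
    {B : Set (Sp n)} (hB : IsBounded B) (hBm : MeasurableSet B)
    {τ : ℝ≥0∞} (hτ : 0 < τ) {ε₀ : ℝ} (hε₀ : 0 < ε₀) :
    ∃ f : Sp n → ℝ, ContDiff ℝ (⊤ : ℕ∞) f ∧ (∀ x, 0 ≤ f x) ∧ (∀ x, f x ≤ 1) ∧
      (∀ x, (∀ y ∈ ball x ε₀, v y = 0) → f x = 0) ∧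
      (∀ x, (∀ y ∈ ball x ε₀, v y = 1) → f x = 1) ∧
      JJ n s (QQ C) (fun x => f x - v x) ≤ τ ∧
      ∫⁻ x in B, ‖f x - v x‖ₑ ≤ τ := by
  obtain ⟨δ1, hδ1, H1⟩ := tr_JJ n s hv hC hU hr hCU hfin hτ
  obtain ⟨δ2, hδ2, H2⟩ := tr_L1 n hv h0 h1 hB hBm hτ
  set ε := min ε₀ (min δ1 δ2) with hε
  have hεpos : 0 < ε := lt_min hε₀ (lt_min hδ1 hδ2)
  let φ : ContDiffBump (0 : Sp n) := ⟨ε / 2, ε, by linarith, by linarith⟩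
  set η : Sp n → ℝ := φ.normed volume with hηdef
  have hη0 : ∀ z, 0 ≤ η z := φ.nonneg_normed
  have hηc : Continuous η := φ.continuous_normed
  have hηi : Integrable η := φ.integrable_normed
  have hη1 : ∫ z, η z = 1 := φ.integral_normed
  have hsupp : ∀ z, η z ≠ 0 → ‖z‖ < ε := by
    intro z hz
    have : z ∈ Function.support (φ.normed volume) := hz
    rw [φ.support_normed_eq] at this
    simpa using this
  have hvi : ∀ x, Integrable (fun z => η z * v (x - z)) := by
    intro x
    refine hηi.mul_bdd (c := 1) ?_ ?_
    · exact (hv.comp (measurable_const.sub measurable_id)).aestronglyMeasurable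
    · filter_upwards with z
      rw [Real.norm_eq_abs, abs_of_nonneg (h0 _)]; exact h1 _
  set f : Sp n → ℝ := fun x => ∫ z, η z * v (x - z) with hf
  have hconst : ∀ c x, (∀ y ∈ ball x ε₀, v y = c) → f x = c := by
    intro c x hy
    have : ∀ z, η z * v (x - z) = η z * c := by
      intro z
      by_cases hz : η z = 0
      · simp [hz]
      · rw [hy]
        rw [mem_ball, dist_eq_norm]
        have := (hsupp z hz).trans_le (min_le_left _ _)
        simpa using this
    simp only [hf, this]
    rw [integral_mul_const, hη1, one_mul]
  refine ⟨f, ?_, ?_, ?_, hconst 0, hconst 1, ?_, ?_⟩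
  · have : f = convolution η v (ContinuousLinearMap.lsmul ℝ ℝ) volume := by
      ext x
      rfl
    rw [this]
    apply HasCompactSupport.contDiff_convolution_left
    · exact φ.hasCompactSupport_normed
    · exact φ.contDiff_normed
    · have : LocallyIntegrable (fun _ : Sp n => (1 : ℝ)) volume := locallyIntegrable_const 1
      refine this.mono hv.aestronglyMeasurable ?_
      filter_upwards with x
      rw [Real.norm_eq_abs, abs_of_nonneg (h0 _)]; simpa using h1 _
  · intro x
    exact integral_nonneg fun z => mul_nonneg (hη0 z) (h0 _)
  · intro x
    rw [← hη1]
    apply integral_mono (hvi x) hηi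
    intro z
    exact mul_le_of_le_one_right (hη0 z) (h1 _)
  · have key := average_le ((kap n s).restrict (QQ C)) hηc.measurable hη0 hηi hη1 hsupp
      (w := fun z p => (v (p.1 - z) - v (p.2 - z)) - (v p.1 - v p.2)) (τ := τ) ?_ ?_
    · refine le_trans (le_of_eq ?_) key
      unfold JJ
      apply lintegral_congr
      intro p
      congr 1
      have e1 : ∀ z, η z * ((v (p.1 - z) - v (p.2 - z)) - (v p.1 - v p.2)) =
        (η z * v (p.1 - z) - η z * v (p.2 - z)) - η z * (v p.1 - v p.2) := by intro z; ring
      simp_rw [e1]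
      have i1 : Integrable (fun z => η z * v (p.1 - z) - η z * v (p.2 - z)) := (hvi _).sub (hvi _)
      rw [integral_sub i1 (hηi.mul_const _), integral_sub (hvi _) (hvi _),
        integral_mul_const, hη1]
      simp only [hf]; ring
    · have m1 : Measurable (fun q : Sp n × (Sp n × Sp n) => v (q.2.1 - q.1)) := by fun_prop
      have m2 : Measurable (fun q : Sp n × (Sp n × Sp n) => v (q.2.2 - q.1)) := by fun_prop
      have m3 : Measurable (fun q : Sp n × (Sp n × Sp n) => v (q.2.1)) := by fun_prop
      have m4 : Measurable (fun q : Sp n × (Sp n × Sp n) => v (q.2.2)) := by fun_prop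
      exact (m1.sub m2).sub (m3.sub m4)
    · intro z hz
      exact H1 z (hz.trans_le ((min_le_right _ _).trans (min_le_left _ _)))
  · have key := average_le ((volume : Measure (Sp n)).restrict B) hηc.measurable hη0 hηi hη1 hsupp
      (w := fun z x => v (x - z) - v x) (τ := τ) ?_ ?_
    · refine le_trans (le_of_eq ?_) key
      apply lintegral_congr
      intro x
      congr 1
      have e1 : ∀ z, η z * (v (x - z) - v x) = η z * v (x - z) - η z * v x := by intro z; ring
      simp_rw [e1]
      rw [integral_sub (hvi _) (hηi.mul_const _), integral_mul_const, hη1]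
      simp only [hf]; ring
    · have m1 : Measurable (fun q : Sp n × Sp n => v (q.2 - q.1)) := by fun_prop
      have m3 : Measurable (fun q : Sp n × Sp n => v (q.2)) := by fun_prop
      exact m1.sub m3
    · intro z hz
      exact H2 z (hz.trans_le ((min_le_right _ _).trans (min_le_right _ _)))

open Classical in
theorem stage_of_smooth (n : ℕ) (hn : 1 ≤ n) (s : ℝ) (hs : s ∈ Set.Ioo (0 : ℝ) 1)
    {f : Sp n → ℝ} (hf : ContDiff ℝ (⊤ : ℕ∞) f)
    (h0 : ∀ x, 0 ≤ f x) (h1 : ∀ x, f x ≤ 1) {ψ : Sp n → ℝ} (hψ : ContDiff ℝ (⊤ : ℕ∞) ψ)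
    (hψ0 : ∀ x, 0 ≤ ψ x) (hψ1 : ∀ x, ψ x ≤ 1) (hψf : ∀ x, f x ≠ 0 → ∀ᶠ y in 𝓝 x, ψ y = 1)
    {E : Set (Sp n)} (hE : MeasurableSet E) {S : Set (Sp n × Sp n)}
    (hS : MeasurableSet S) {B : Set (Sp n)} (hB : MeasurableSet B) (hBb : IsBounded B)
    (hJf : JJ n s S f < ⊤) (hJψ : JJ n s S (fun x => ψ x • thet n x) < ⊤) {τ : ℝ≥0∞}
    (hτ : JJ n s S (fun x => f x - if x ∈ E then (1 : ℝ) else 0) +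
      ∫⁻ x in B, ‖f x - if x ∈ E then (1 : ℝ) else 0‖ₑ < τ * 2⁻¹) :
    ∃ F : Set (Sp n), HasSmoothBoundary F ∧ MeasurableSet F ∧ (∀ x ∈ F, f x ≠ 0) ∧
      (∀ x ∈ frontier F, f x ≠ 0 ∧ f x ≠ 1) ∧
      kap n s (((F ×ˢ Fᶜ) ∆ (E ×ˢ Eᶜ)) ∩ S) + volume ((F ∆ E) ∩ B) < τ ∧
      ∀ j : ℕ, kap n s ((F ×ˢ Fᶜ) ∩ QQ (ball 0 j)) < ⊤ := by
  set A := JJ n s S (fun x => f x - if x ∈ E then (1 : ℝ) else 0) +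
      ∫⁻ x in B, ‖f x - if x ∈ E then (1 : ℝ) else 0‖ₑ with hA
  set M : ℝ≥0∞ := 2 * JJ n s S f + JJ n s S (fun x => ψ x • thet n x) + 4 * volume B with hM
  have hMtop : M ≠ ⊤ := by
    have := hBb.measure_lt_top (μ := (volume : Measure (Sp n)))
    simp only [hM]
    finiteness
  obtain ⟨c, hc0, hc⟩ := ENNReal.exists_nnreal_pos_mul_lt hMtop (tsub_pos_iff_lt.2 hτ).ne'
  set δ : ℝ≥0 := min c (1/8) with hδ
  have hδ0 : 0 < δ := lt_min hc0 (by norm_num)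
  have hδ8 : (δ : ℝ) ≤ 1/8 := by
    have : δ ≤ 1/8 := min_le_right _ _
    exact_mod_cast this
  have hδM : A + δ * M < τ * 2⁻¹ := by
    have h2 : (δ : ℝ≥0∞) * M < τ * 2⁻¹ - A := by
      refine lt_of_le_of_lt ?_ hc
      gcongr
      exact min_le_left _ _
    rw [add_comm]
    exact lt_tsub_iff_right.1 h2
  have hδ0' : (0 : ℝ) < δ := hδ0
  obtain ⟨a, ha, hN⟩ := sard_perturb n (fun x => (1 - 2 * (δ : ℝ)) * f x)
    (contDiff_const.mul hf) δ hδ0'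
  set N := {c : ℝ | ∃ x, (1 - 2 * (δ : ℝ)) * f x + inner ℝ a (thet n x) = c ∧
        fderiv ℝ (fun x => (1 - 2 * (δ : ℝ)) * f x + inner ℝ a (thet n x)) x = 0} with hNdef
  set q : Sp n → ℝ := fun x => inner ℝ a (ψ x • thet n x) with hq
  have hqc : ContDiff ℝ (⊤ : ℕ∞) q :=
    contDiff_const.inner ℝ (hψ.smul (thet_contDiff n _))
  have hψθ : ∀ x, ‖ψ x • thet n x‖ ≤ 1 := by
    intro x
    rw [norm_smul, Real.norm_eq_abs, abs_of_nonneg (hψ0 x)]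
    exact mul_le_one₀ (hψ1 x) (norm_nonneg _) (thet_norm_le n x)
  have hqδ : ∀ x, |q x| ≤ δ := by
    intro x
    refine (abs_real_inner_le_norm _ _).trans ?_
    calc ‖a‖ * ‖ψ x • thet n x‖ ≤ δ * 1 := by
          gcongr
          exact hψθ x
      _ = δ := mul_one _
  set g : Sp n → ℝ := fun x => (1 - 2 * (δ : ℝ)) * f x + δ + q x with hg
  have hgc : ContDiff ℝ (⊤ : ℕ∞) g := ((contDiff_const.mul hf).add contDiff_const).add hqc
  have hg0 : ∀ x, 0 ≤ g x := by
    intro x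
    have := (abs_le.1 (hqδ x)).1
    have h3 : 0 ≤ (1 - 2 * (δ : ℝ)) * f x := mul_nonneg (by linarith) (h0 x)
    simp only [hg]; linarith
  have hg1 : ∀ x, g x ≤ 1 := by
    intro x
    have := (abs_le.1 (hqδ x)).2
    have h3 : (1 - 2 * (δ : ℝ)) * f x ≤ (1 - 2 * (δ : ℝ)) * 1 :=
      mul_le_mul_of_nonneg_left (h1 x) (by linarith)
    simp only [hg]; linarith
  -- smallness
  have hem : Measurable (fun x : Sp n => f x - if x ∈ E then (1 : ℝ) else 0) :=
    hf.continuous.measurable.sub (Measurable.ite hE measurable_const measurable_const)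
  have hJ : JJ n s S (fun x => g x - if x ∈ E then (1 : ℝ) else 0) ≤
      JJ n s S (fun x => f x - if x ∈ E then (1 : ℝ) else 0) +
      (δ * (2 * JJ n s S f) + δ * JJ n s S (fun x => ψ x • thet n x)) := by
    have e1 : (fun x => g x - if x ∈ E then (1 : ℝ) else 0) =
      fun x => (f x - if x ∈ E then (1 : ℝ) else 0) + ((δ - 2 * δ * f x) + q x) := by
      ext x; simp only [hg]; ring
    rw [e1]
    refine (JJ_add_le hem).trans ?_
    gcongr
    refine (JJ_add_le (by
      exact measurable_const.sub (measurable_const.mul hf.continuous.measurable))).trans ?_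
    gcongr
    · have := JJ_le_mul (n := n) (s := s) (S := S) (u := fun x => (δ : ℝ) - 2 * δ * f x) (w := f)
        (c := δ * 2) (by
          intro x y
          have : ((δ : ℝ) - 2 * δ * f x) - (δ - 2 * δ * f y) = -(δ * 2) * (f x - f y) := by ring
          rw [this, norm_mul, norm_neg]
          simp)
      refine this.trans (le_of_eq ?_)
      push_cast
      rw [mul_assoc]
    · apply JJ_le_mul
      intro x y
      simp only [hq]
      rw [← inner_sub_right]
      refine (norm_inner_le_norm _ _).trans ?_
      gcongr
  have hL : ∫⁻ x in B, ‖g x - if x ∈ E then (1 : ℝ) else 0‖ₑ ≤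
      (∫⁻ x in B, ‖f x - if x ∈ E then (1 : ℝ) else 0‖ₑ) + δ * (4 * volume B) := by
    have : (δ : ℝ≥0∞) * (4 * volume B) = ∫⁻ x in B, ENNReal.ofReal (4 * δ) := by
      rw [lintegral_const, Measure.restrict_apply MeasurableSet.univ, univ_inter,
        ENNReal.ofReal_mul (by norm_num), ENNReal.ofReal_coe_nnreal, ← mul_assoc,
        mul_comm (δ : ℝ≥0∞) 4]
      norm_num
    rw [this, ← lintegral_add_left hem.enorm]
    apply lintegral_mono
    intro x
    simp only
    have e2 : (g x - if x ∈ E then (1 : ℝ) else 0) =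
      (f x - if x ∈ E then (1 : ℝ) else 0) + ((δ - 2 * δ * f x) + q x) := by
      simp only [hg]; ring
    rw [e2]
    refine (enorm_add_le _ _).trans ?_
    gcongr
    rw [← ofReal_norm]
    apply ENNReal.ofReal_le_ofReal
    rw [Real.norm_eq_abs, abs_le]
    have hh := abs_le.1 (hqδ x)
    have h4 : 0 ≤ δ * f x := mul_nonneg hδ0'.le (h0 x)
    have h5 : δ * f x ≤ δ * 1 := mul_le_mul_of_nonneg_left (h1 x) hδ0'.le
    constructor <;> nlinarith
  have hsmall : JJ n s S (fun x => g x - if x ∈ E then (1 : ℝ) else 0) +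
      ∫⁻ x in B, ‖g x - if x ∈ E then (1 : ℝ) else 0‖ₑ < τ * 2⁻¹ := by
    refine lt_of_le_of_lt (add_le_add hJ hL) (lt_of_eq_of_lt ?_ hδM)
    simp only [hA, hM]
    ring
  obtain ⟨t, ht, htN, hlt, hfin⟩ := select_level n s hgc.continuous.measurable hg0 hg1 hE hS hB
    hsmall (fun j => JJ_ball_lt_top n hn s hs (hgc.of_le (by exact_mod_cast le_top)) (M := 1)
      (fun x => by rw [Real.norm_eq_abs, abs_of_nonneg (hg0 x)]; exact hg1 x) j)
    (hN.image (fun c => c + (δ : ℝ)))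
  have hf0 : ∀ x, t ≤ g x → f x ≠ 0 := by
    intro x hx hfx
    have := (abs_le.1 (hqδ x)).2
    simp only [hg, hfx] at hx
    linarith [ht.1]
  have hf1 : ∀ x, g x ≤ t → f x ≠ 1 := by
    intro x hx hfx
    have := (abs_le.1 (hqδ x)).1
    simp only [hg, hfx] at hx
    linarith [ht.2]
  refine ⟨{x | t < g x}, ⟨g, t, hgc, ?_, rfl⟩, measurableSet_lt measurable_const
    hgc.continuous.measurable, fun x hx => hf0 x (le_of_lt hx), ?_, hlt, hfin⟩
  · intro x hx hd
    apply htN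
    refine ⟨t - δ, ⟨x, ?_, ?_⟩, by simp⟩
    · have h7 := (hψf x (hf0 x hx.ge)).self_of_nhds
      simp only [hg, hq, h7, one_smul] at hx
      linarith
    · have h8 : g =ᶠ[𝓝 x] fun x => ((1 - 2 * (δ : ℝ)) * f x + inner ℝ a (thet n x)) + δ := by
        filter_upwards [hψf x (hf0 x hx.ge)] with y hy
        simp only [hg, hq, hy, one_smul]
        ring
      rw [h8.fderiv_eq, fderiv_add_const] at hd
      exact hd
  · intro x hx
    have := frontier_lt_subset_eq continuous_const hgc.continuous hx
    have hx' : t = g x := this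
    exact ⟨hf0 x hx'.le, hf1 x hx'.ge⟩

theorem tendsto_of_symmDiff {n : ℕ} (s : ℝ) {A : ℕ → Set (Sp n × Sp n)} {B Q : Set (Sp n × Sp n)}
    (hfin : kap n s (B ∩ Q) < ⊤)
    (h : Tendsto (fun k => kap n s ((A k ∆ B) ∩ Q)) atTop (𝓝 0)) :
    Tendsto (fun k => kap n s (A k ∩ Q)) atTop (𝓝 (kap n s (B ∩ Q))) := by
  have h1 : ∀ k, kap n s (A k ∩ Q) ≤ kap n s (B ∩ Q) + kap n s ((A k ∆ B) ∩ Q) := by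
    intro k
    refine (measure_mono ?_).trans (measure_union_le _ _)
    intro p hp
    by_cases hB : p ∈ B
    · exact Or.inl ⟨hB, hp.2⟩
    · exact Or.inr ⟨Or.inl ⟨hp.1, hB⟩, hp.2⟩
  have h2 : ∀ k, kap n s (B ∩ Q) ≤ kap n s (A k ∩ Q) + kap n s ((A k ∆ B) ∩ Q) := by
    intro k
    refine (measure_mono ?_).trans (measure_union_le _ _)
    intro p hp
    by_cases hB : p ∈ A k
    · exact Or.inl ⟨hB, hp.2⟩
    · exact Or.inr ⟨Or.inr ⟨hp.1, hB⟩, hp.2⟩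
  have u1 : Tendsto (fun k => kap n s (B ∩ Q) + kap n s ((A k ∆ B) ∩ Q)) atTop
      (𝓝 (kap n s (B ∩ Q))) := by
    simpa using (tendsto_const_nhds (x := kap n s (B ∩ Q))).add h
  have u2 : Tendsto (fun k => kap n s (B ∩ Q) - kap n s ((A k ∆ B) ∩ Q)) atTop
      (𝓝 (kap n s (B ∩ Q))) := by
    simpa using ENNReal.Tendsto.sub (tendsto_const_nhds (x := kap n s (B ∩ Q))) h
      (Or.inl hfin.ne)
  exact tendsto_of_tendsto_of_tendsto_of_le_of_le u2 u1
    (fun k => tsub_le_iff_right.2 (h2 k)) h1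

open Classical in
theorem JJ_ind (n : ℕ) (s : ℝ) {E U : Set (Sp n)} (hE : MeasurableSet E) (hU : MeasurableSet U)
    (h : Ps n s E U < ⊤) : JJ n s (QQ U) (fun x => if x ∈ E then (1 : ℝ) else 0) < ⊤ := by
  rw [Ps_eq n s hE hU] at h
  have hm : MeasurableSet ((E ×ˢ Eᶜ) ∩ QQ U) := (hE.prod hE.compl).inter (measurableSet_QQ hU)
  have h2 : kap n s ((Eᶜ ×ˢ E) ∩ QQ U) < ⊤ := by
    have e : Prod.swap ⁻¹' ((E ×ˢ Eᶜ) ∩ QQ U) = (Eᶜ ×ˢ E) ∩ QQ U := by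
      ext p
      simp only [QQ, mem_preimage, mem_inter_iff, mem_prod, Prod.fst_swap, Prod.snd_swap,
        mem_ofPred_eq]
      tauto
    rw [← e, (kap_swap n s).measure_preimage hm.nullMeasurableSet]
    exact h
  unfold JJ
  have hb : ∀ p : Sp n × Sp n, p ∈ QQ U → ‖(if p.1 ∈ E then (1 : ℝ) else 0) -
      (if p.2 ∈ E then (1 : ℝ) else 0)‖ₑ ≤
      (((E ×ˢ Eᶜ) ∩ QQ U) ∪ ((Eᶜ ×ˢ E) ∩ QQ U)).indicator (fun _ => 1) p := by
    intro p hp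
    by_cases h1 : p.1 ∈ E <;> by_cases h3 : p.2 ∈ E <;>
      simp [h1, h3, indicator, hp]
  calc _ ≤ ∫⁻ p in QQ U, (((E ×ˢ Eᶜ) ∩ QQ U) ∪ ((Eᶜ ×ˢ E) ∩ QQ U)).indicator (fun _ => 1) p
        ∂(kap n s) := setLIntegral_mono' (measurableSet_QQ hU) hb
    _ ≤ ∫⁻ p, (((E ×ˢ Eᶜ) ∩ QQ U) ∪ ((Eᶜ ×ˢ E) ∩ QQ U)).indicator (fun _ => 1) p
        ∂(kap n s) := setLIntegral_le_lintegral _ _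
    _ ≤ kap n s (((E ×ˢ Eᶜ) ∩ QQ U) ∪ ((Eᶜ ×ˢ E) ∩ QQ U)) := by
        exact (lintegral_indicator_const_le _ _).trans (by simp)
    _ ≤ _ := measure_union_le _ _
    _ < ⊤ := ENNReal.add_lt_top.2 ⟨h, h2⟩

theorem small_arith {τ : ℝ≥0∞} (hτ : 0 < τ) (hτt : τ < ⊤) : τ / 8 + τ / 8 < τ * 2⁻¹ := by
  lift τ to ℝ≥0 using hτt.ne
  have hτ' : 0 < τ := by exact_mod_cast hτ
  have e : ((τ / 8 + τ / 8 : ℝ≥0) : ℝ≥0∞) < ((τ * 2⁻¹ : ℝ≥0) : ℝ≥0∞) := by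
    rw [ENNReal.coe_lt_coe, ← NNReal.coe_lt_coe]
    push_cast
    have : (0 : ℝ) < τ := hτ'
    linarith
  rw [ENNReal.coe_add, ENNReal.coe_div (by norm_num), ENNReal.coe_mul,
    ENNReal.coe_inv (by norm_num)] at e
  simp only [ENNReal.coe_div (show (8 : ℝ≥0) ≠ 0 by norm_num), ENNReal.coe_ofNat] at e
  exact e

theorem meets_frontier {X : Type*} [TopologicalSpace X] {s E : Set X} (hs : IsPreconnected s)
    {y z : X} (hy : y ∈ s) (hyE : y ∈ E) (hz : z ∈ s) (hzE : z ∉ E) :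
    ∃ w ∈ s, w ∈ frontier E := by
  by_contra! h
  have hi : ∀ w ∈ s, w ∈ closure E → w ∈ interior E := by
    intro w hw hc
    by_contra hn
    exact h w hw ⟨hc, hn⟩
  obtain ⟨w, -, hw1, hw2⟩ := hs (interior E) (closure E)ᶜ isOpen_interior
    isClosed_closure.isOpen_compl
    (fun w hw => by
      by_cases hc : w ∈ closure E
      · exact Or.inl (hi w hw hc)
      · exact Or.inr hc)
    ⟨y, hy, hi y hy (subset_closure hyE)⟩
    ⟨z, hz, fun hc => hzE (interior_subset (hi z hz hc))⟩
  exact hw2 (subset_closure (interior_subset hw1))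

theorem stage_local (n : ℕ) (hn : 1 ≤ n) (s : ℝ) (hs : s ∈ Set.Ioo (0 : ℝ) 1)
    {Ω : Set (Sp n)} (hΩ : IsOpen Ω) {E : Set (Sp n)} (hE : MeasurableSet E)
    (hP : ∀ Ω' : Set (Sp n), IsOpen Ω' → IsCompact (closure Ω') →
        closure Ω' ⊆ Ω → Ps n s E Ω' < ⊤) {C : Set (Sp n)} (hC : IsCompact C) (hCΩ : C ⊆ Ω)
    (R : ℝ) {ε : ℝ} (hε : 0 < ε) {τ : ℝ≥0∞} (hτ : 0 < τ) (hτt : τ < ⊤) :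
    ∃ F : Set (Sp n), HasSmoothBoundary F ∧ MeasurableSet F ∧
      frontier F ⊆ thickening ε (frontier E) ∧
      kap n s (((F ×ˢ Fᶜ) ∆ (E ×ˢ Eᶜ)) ∩ QQ C) + volume ((F ∆ E) ∩ ball 0 R) < τ ∧
      ∀ j : ℕ, kap n s ((F ×ˢ Fᶜ) ∩ QQ (ball 0 j)) < ⊤ := by
  classical
  obtain ⟨r, hr, hrΩ⟩ := hC.exists_cthickening_subset_open hΩ hCΩ
  set v : Sp n → ℝ := fun x => if x ∈ E then (1 : ℝ) else 0 with hv
  have hvm : Measurable v := Measurable.ite hE measurable_const measurable_const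
  have hcl : closure (thickening r C) ⊆ cthickening r C := closure_thickening_subset_cthickening r C
  have hU : Ps n s E (thickening r C) < ⊤ :=
    hP _ isOpen_thickening (hC.cthickening.of_isClosed_subset isClosed_closure hcl)
      (hcl.trans hrΩ)
  have hJv : JJ n s (QQ (thickening r C)) v < ⊤ :=
    JJ_ind n s hE isOpen_thickening.measurableSet hU
  have hτ8 : 0 < τ / 8 := ENNReal.div_pos hτ.ne' (by norm_num)
  obtain ⟨f, hf, h0, h1, hf0, hf1, hJ, hL⟩ := mollify n s (v := v) hvm
    (fun x => by simp only [hv]; split_ifs <;> norm_num)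
    (fun x => by simp only [hv]; split_ifs <;> norm_num)
    (C := C) (U := thickening r C) hC.measurableSet isOpen_thickening.measurableSet hr
    (fun x hx z hz => by
      rw [mem_thickening_iff]
      exact ⟨x, hx, by simpa [dist_eq_norm] using hz⟩) hJv
    (B := ball 0 R) isBounded_ball measurableSet_ball hτ8 hε
  obtain ⟨R', hR'⟩ := hC.isBounded.subset_ball 0
  have hJf : JJ n s (QQ C) f < ⊤ := by
    refine lt_of_le_of_lt (JJ_mono (QQ_mono hR') _)
      (JJ_ball_lt_top n hn s hs (hf.of_le (by exact_mod_cast le_top)) (M := 1) (fun x => ?_) R')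
    rw [Real.norm_eq_abs, abs_of_nonneg (h0 x)]
    exact h1 x
  have hJψ : JJ n s (QQ C) (fun x => (fun _ => (1 : ℝ)) x • thet n x) < ⊤ := by
    simp only [one_smul]
    exact lt_of_le_of_lt (JJ_mono (QQ_mono hR') _)
      (JJ_ball_lt_top n hn s hs (thet_contDiff n 1) (M := 1) (thet_norm_le n) R')
  obtain ⟨F, hF1, hF2, -, hF4, hF5, hF6⟩ := stage_of_smooth n hn s hs hf h0 h1
    (ψ := fun _ => 1) contDiff_const (by simp) (by simp) (by simp) hE
    (measurableSet_QQ hC.measurableSet) (B := ball 0 R) measurableSet_ball isBounded_ball hJf hJψ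
    (τ := τ) (by
      refine lt_of_le_of_lt (add_le_add hJ hL) ?_
      exact small_arith hτ hτt)
  refine ⟨F, hF1, hF2, ?_, hF5, hF6⟩
  intro x hx
  obtain ⟨hx0, hx1⟩ := hF4 x hx
  have e1 : ¬ ∀ y ∈ ball x ε, v y = 0 := fun h => hx0 (hf0 x h)
  have e2 : ¬ ∀ y ∈ ball x ε, v y = 1 := fun h => hx1 (hf1 x h)
  push Not at e1 e2
  obtain ⟨y, hy, hyv⟩ := e1
  obtain ⟨z, hz, hzv⟩ := e2
  have hyE : y ∈ E := by by_contra h; exact hyv (by simp [hv, h])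
  have hzE : z ∉ E := by intro h; exact hzv (by simp [hv, h])
  obtain ⟨w, hw, hwE⟩ := meets_frontier (convex_ball x ε).isPreconnected hy hyE hz hzE
  rw [mem_thickening_iff]
  exact ⟨w, hwE, by rw [dist_comm]; exact hw⟩

theorem iSup_lt_top_of_tendsto {u : ℕ → ℝ≥0∞} {a : ℝ≥0∞} (ha : a < ⊤) (hu : ∀ h, u h < ⊤)
    (h : Tendsto u atTop (𝓝 a)) : (⨆ h, u h) < ⊤ := by
  have h1 : ∀ᶠ k in atTop, u k < a + 1 :=
    h.eventually_lt_const (ENNReal.lt_add_right ha.ne one_ne_zero)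
  obtain ⟨N, hN⟩ := eventually_atTop.1 h1
  have hle : (⨆ h, u h) ≤ (a + 1) + ∑ k ∈ Finset.range N, u k := by
    refine iSup_le fun k => ?_
    by_cases hk : N ≤ k
    · exact (hN k hk).le.trans le_self_add
    · refine le_trans ?_ le_add_self
      exact Finset.single_le_sum (f := u) (fun _ _ => zero_le) (Finset.mem_range.2 (not_le.1 hk))
  refine lt_of_le_of_lt hle (ENNReal.add_lt_top.2 ⟨?_, ?_⟩)
  · exact ENNReal.add_lt_top.2 ⟨ha, ENNReal.one_lt_top⟩
  · exact ENNReal.sum_lt_top.2 fun k _ => hu k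

theorem measurableSet_of_smooth {n : ℕ} {F : Set (Sp n)} (h : HasSmoothBoundary F) :
    MeasurableSet F := by
  obtain ⟨f, t, hf, -, rfl⟩ := h
  exact (isOpen_lt continuous_const hf.continuous).measurableSet

theorem tendsto_inv_enn : Tendsto (fun m : ℕ => ENNReal.ofReal (1 / ((m : ℝ) + 1))) atTop (𝓝 0) := by
  have := ENNReal.tendsto_ofReal (tendsto_one_div_add_atTop_nhds_zero_nat (𝕜 := ℝ))
  simpa using this

theorem part_one_mp (n : ℕ) (hn : 1 ≤ n) (s : ℝ) (hs : s ∈ Set.Ioo (0 : ℝ) 1)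
    {Ω : Set (Sp n)} (hΩ : IsOpen Ω) {E : Set (Sp n)} (hE : MeasurableSet E)
    (hP : ∀ Ω' : Set (Sp n), IsOpen Ω' → IsCompact (closure Ω') →
        closure Ω' ⊆ Ω → Ps n s E Ω' < ⊤) :
    ∃ (Eh : ℕ → Set (Sp n)) (ε : ℕ → ℝ),
          (∀ h, HasSmoothBoundary (Eh h)) ∧
          (∀ h, 0 < ε h) ∧ Tendsto ε atTop (𝓝 0) ∧
          LocConv n Eh E ∧
          (∀ Ω' : Set (Sp n), IsOpen Ω' → IsCompact (closure Ω') →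
            closure Ω' ⊆ Ω → (⨆ h, Ps n s (Eh h) Ω') < ⊤) ∧
          (∀ Ω' : Set (Sp n), IsOpen Ω' → IsCompact (closure Ω') →
            closure Ω' ⊆ Ω →
            Tendsto (fun h => Ps n s (Eh h) Ω') atTop (𝓝 (Ps n s E Ω'))) ∧
          (∀ h, frontier (Eh h) ⊆ Metric.thickening (ε h) (frontier E)) := by
  set ε : ℕ → ℝ := fun m => 1 / ((m : ℝ) + 1) with hε
  have hε0 : ∀ m, 0 < ε m := fun m => by simp only [hε]; positivity
  have hεt : Tendsto ε atTop (𝓝 0) := tendsto_one_div_add_atTop_nhds_zero_nat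
  set C : ℕ → Set (Sp n) := fun m => closedBall 0 m ∩ (thickening (ε m) Ωᶜ)ᶜ with hC
  have hCc : ∀ m, IsCompact (C m) := fun m =>
    (isCompact_closedBall _ _).inter_right isOpen_thickening.isClosed_compl
  have hCΩ : ∀ m, C m ⊆ Ω := by
    intro m x hx
    by_contra hxΩ
    exact hx.2 (self_subset_thickening (hε0 m) _ hxΩ)
  have hex : ∀ K : Set (Sp n), IsCompact K → K ⊆ Ω → ∀ᶠ m in atTop, K ⊆ C m := by
    intro K hK hKΩ
    obtain ⟨r, hr, hrΩ⟩ := hK.exists_cthickening_subset_open hΩ hKΩ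
    obtain ⟨R, hR⟩ := hK.isBounded.subset_closedBall 0
    filter_upwards [hεt.eventually_lt_const hr, tendsto_natCast_atTop_atTop.eventually_ge_atTop R]
      with m hm1 hm2
    intro x hx
    refine ⟨closedBall_subset_closedBall hm2 (hR hx), fun hxt => ?_⟩
    obtain ⟨z, hz, hxz⟩ := mem_thickening_iff.1 hxt
    refine hz (hrΩ (thickening_subset_cthickening _ _ ?_))
    exact mem_thickening_iff.2 ⟨x, hx, by rw [dist_comm]; linarith⟩
  choose F hF1 hF2 hF3 hF4 hF5 using fun m : ℕ => stage_local n hn s hs hΩ hE hP (hCc m) (hCΩ m)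
    (m : ℝ) (hε0 m) (τ := ENNReal.ofReal (ε m)) (ENNReal.ofReal_pos.2 (hε0 m))
    ENNReal.ofReal_lt_top
  have hconv : ∀ Ω' : Set (Sp n), IsOpen Ω' → IsCompact (closure Ω') →
            closure Ω' ⊆ Ω →
            Tendsto (fun h => Ps n s (F h) Ω') atTop (𝓝 (Ps n s E Ω')) := by
    intro Ω' ho hc hsub
    have hfin := hP Ω' ho hc hsub
    simp only [Ps_eq n s (hF2 _) ho.measurableSet]
    rw [Ps_eq n s hE ho.measurableSet] at hfin ⊢
    refine tendsto_of_symmDiff s hfin ?_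
    refine tendsto_of_tendsto_of_tendsto_of_le_of_le' tendsto_const_nhds tendsto_inv_enn
      (Eventually.of_forall fun _ => zero_le) ?_
    filter_upwards [hex _ hc hsub] with m hm
    refine le_trans ?_ (hF4 m).le
    refine le_trans (measure_mono ?_) le_self_add
    exact inter_subset_inter_right _ (QQ_mono (subset_closure.trans hm))
  refine ⟨F, ε, hF1, hε0, hεt, ?_, ?_, hconv, hF3⟩
  · intro K hK
    obtain ⟨R, hR⟩ := hK.subset_ball 0
    refine tendsto_of_tendsto_of_tendsto_of_le_of_le' tendsto_const_nhds tendsto_inv_enn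
      (Eventually.of_forall fun _ => zero_le) ?_
    filter_upwards [tendsto_natCast_atTop_atTop.eventually_ge_atTop R] with m hm
    refine le_trans ?_ (hF4 m).le
    refine le_trans (measure_mono ?_) le_add_self
    exact inter_subset_inter_right _ (hR.trans (ball_subset_ball hm))
  · intro Ω' ho hc hsub
    refine iSup_lt_top_of_tendsto (hP Ω' ho hc hsub) (fun h => ?_) (hconv Ω' ho hc hsub)
    obtain ⟨R, hR⟩ := hc.isBounded.subset_ball 0
    obtain ⟨j, hj⟩ := exists_nat_ge R
    rw [Ps_eq n s (hF2 _) ho.measurableSet]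
    refine lt_of_le_of_lt (measure_mono ?_) (hF5 h j)
    exact inter_subset_inter_right _
      (QQ_mono (subset_closure.trans (hR.trans (ball_subset_ball hj))))

/-- Lipschitz cutoff functions -/
noncomputable def cutf {n : ℕ} (k : ℕ) (x : Sp n) : ℝ := max 0 (min 1 (2 - ‖x‖ / ((k : ℝ) + 1)))

theorem cutf_nonneg {n : ℕ} (k : ℕ) (x : Sp n) : 0 ≤ cutf k x := le_max_left _ _

theorem cutf_le {n : ℕ} (k : ℕ) (x : Sp n) : cutf k x ≤ 1 :=
  max_le zero_le_one (min_le_left _ _)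

theorem cutf_cont {n : ℕ} (k : ℕ) : Continuous (cutf (n := n) k) := by
  unfold cutf
  fun_prop

theorem cutf_sub {n : ℕ} (k : ℕ) (x y : Sp n) : |cutf k x - cutf k y| ≤ min 1 (dist x y) := by
  refine le_min ?_ ?_
  · rw [abs_le]
    constructor <;> linarith [cutf_nonneg k x, cutf_nonneg k y, cutf_le k x, cutf_le k y]
  · unfold cutf
    refine (abs_max_sub_max_le_max _ _ _ _).trans ?_
    refine max_le (by simp) ?_
    refine (abs_min_sub_min_le_max _ _ _ _).trans ?_
    refine max_le (by simp) ?_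
    have hk : (1 : ℝ) ≤ (k : ℝ) + 1 := by
      have : (0 : ℝ) ≤ k := Nat.cast_nonneg k
      linarith
    have : 2 - ‖x‖ / ((k : ℝ) + 1) - (2 - ‖y‖ / ((k : ℝ) + 1)) =
      (‖y‖ - ‖x‖) / ((k : ℝ) + 1) := by ring
    rw [this, abs_div, abs_of_pos (by linarith : (0 : ℝ) < (k : ℝ) + 1)]
    refine (div_le_self (abs_nonneg _) hk).trans ?_
    rw [dist_comm, dist_eq_norm]
    exact abs_norm_sub_norm_le _ _

theorem cutf_one {n : ℕ} {k : ℕ} {x : Sp n} (h : ‖x‖ ≤ (k : ℝ) + 1) : cutf k x = 1 := by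
  have hk : (0 : ℝ) < (k : ℝ) + 1 := by positivity
  have : ‖x‖ / ((k : ℝ) + 1) ≤ 1 := (div_le_one hk).2 h
  unfold cutf
  rw [min_eq_left (by linarith), max_eq_right zero_le_one]

theorem cutf_zero {n : ℕ} {k : ℕ} {x : Sp n} (h : 2 * ((k : ℝ) + 1) ≤ ‖x‖) : cutf k x = 0 := by
  have hk : (0 : ℝ) < (k : ℝ) + 1 := by positivity
  have : 2 ≤ ‖x‖ / ((k : ℝ) + 1) := (le_div_iff₀ hk).2 h
  unfold cutf
  exact max_eq_left ((min_le_right _ _).trans (by linarith))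

theorem cutf_ev {n : ℕ} (x : Sp n) : ∀ᶠ k : ℕ in atTop, cutf k x = 1 := by
  filter_upwards [tendsto_natCast_atTop_atTop.eventually_ge_atTop ‖x‖] with k hk
  exact cutf_one (by linarith)

theorem QQ_univ {n : ℕ} : QQ (univ : Set (Sp n)) = univ := by
  ext p; simp [QQ]

open Classical in
theorem truncate (n : ℕ) (hn : 1 ≤ n) (s : ℝ) (hs : s ∈ Set.Ioo (0 : ℝ) 1) {E : Set (Sp n)}
    (hE : MeasurableSet E) (hvol : volume E < ⊤) (hP : Ps n s E univ < ⊤) {τ : ℝ≥0∞}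
    (hτ : 0 < τ) :
    ∃ (v : Sp n → ℝ) (R : ℝ), 0 < R ∧ Measurable v ∧ (∀ x, 0 ≤ v x) ∧ (∀ x, v x ≤ 1) ∧
      (∀ x, R ≤ ‖x‖ → v x = 0) ∧
      JJ n s univ (fun x => v x - if x ∈ E then (1 : ℝ) else 0) ≤ τ ∧
      ∫⁻ x, ‖v x - if x ∈ E then (1 : ℝ) else 0‖ₑ ≤ τ := by
  set e : Sp n → ℝ := fun x => if x ∈ E then (1 : ℝ) else 0 with he
  have hem : Measurable e := Measurable.ite hE measurable_const measurable_const
  have he0 : ∀ x, 0 ≤ e x := fun x => by simp only [he]; split_ifs <;> norm_num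
  have he1 : ∀ x, e x ≤ 1 := fun x => by simp only [he]; split_ifs <;> norm_num
  have hJe : JJ n s univ e < ⊤ := by
    have := JJ_ind n s hE MeasurableSet.univ hP
    rwa [QQ_univ] at this
  set v : ℕ → Sp n → ℝ := fun k x => cutf k x * e x with hv
  have hvm : ∀ k, Measurable (v k) := fun k => (cutf_cont k).measurable.mul hem
  have hev : ∀ x, ∀ᶠ k in atTop, v k x - e x = 0 := by
    intro x
    filter_upwards [cutf_ev x] with k hk
    simp [hv, hk]
  have T1 : Tendsto (fun k => ∫⁻ x, ‖v k x - e x‖ₑ) atTop (𝓝 0) := by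
    have : Tendsto (fun k => ∫⁻ x, ‖v k x - e x‖ₑ) atTop (𝓝 (∫⁻ x : Sp n, 0)) := by
      refine tendsto_lintegral_of_dominated_convergence (E.indicator fun _ => 1)
        (fun k => ((hvm k).sub hem).enorm) (fun k => Eventually.of_forall fun x => ?_) ?_
        (Eventually.of_forall fun x => ?_)
      · by_cases hx : x ∈ E
        · rw [indicator_of_mem hx]
          have : ‖v k x - e x‖ ≤ 1 := by
            rw [Real.norm_eq_abs, abs_le]
            simp only [hv, he, hx, if_true]
            constructor <;> linarith [cutf_nonneg k x, cutf_le k x]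
          show ‖v k x - e x‖ₑ ≤ 1
          rw [← ofReal_norm]
          exact ENNReal.ofReal_le_one.2 this
        · simp [hv, he, hx]
      · rw [lintegral_indicator_const hE]
        simpa using hvol.ne
      · refine tendsto_const_nhds.congr' ?_
        filter_upwards [hev x] with k hk
        simp [hk]
    simpa using this
  have T2 : Tendsto (fun k => JJ n s univ (fun x => v k x - e x)) atTop (𝓝 0) := by
    unfold JJ
    have : Tendsto (fun k => ∫⁻ p in univ, ‖(v k p.1 - e p.1) - (v k p.2 - e p.2)‖ₑ ∂(kap n s))
        atTop (𝓝 (∫⁻ p : Sp n × Sp n in univ, 0 ∂(kap n s))) := by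
      refine tendsto_lintegral_of_dominated_convergence (fun p => ‖e p.1 - e p.2‖ₑ +
        (univ ×ˢ E).indicator (fun p : Sp n × Sp n => ENNReal.ofReal (min 1 (dist p.1 p.2))) p)
        (fun k => ?_) (fun k => Eventually.of_forall fun p => ?_) ?_
        (Eventually.of_forall fun p => ?_)
      · have := (hvm k).sub hem
        exact ((this.comp measurable_fst).sub (this.comp measurable_snd)).enorm
      · have e1 : (v k p.1 - e p.1) - (v k p.2 - e p.2) = (cutf k p.1 - 1) * (e p.1 - e p.2) +
            (cutf k p.1 - cutf k p.2) * e p.2 := by simp only [hv]; ring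
        simp only [e1]
        refine (enorm_add_le _ _).trans (add_le_add ?_ ?_)
        · rw [enorm_mul]
          refine mul_le_of_le_one_left zero_le ?_
          rw [← ofReal_norm, ENNReal.ofReal_le_one, Real.norm_eq_abs, abs_le]
          constructor <;> linarith [cutf_nonneg k p.1, cutf_le k p.1]
        · by_cases hp : p.2 ∈ E
          · rw [indicator_of_mem (by exact ⟨mem_univ _, hp⟩), ← ofReal_norm]
            refine ENNReal.ofReal_le_ofReal ?_
            simp only [he, hp, if_true, mul_one, Real.norm_eq_abs]
            exact cutf_sub k _ _
          · simp [he, hp]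
      · have hme : Measurable (fun p : Sp n × Sp n => ‖e p.1 - e p.2‖ₑ) :=
          ((hem.comp measurable_fst).sub (hem.comp measurable_snd)).enorm
        rw [lintegral_add_left hme]
        refine (ENNReal.add_lt_top.2 ⟨hJe, ?_⟩).ne
        rw [Measure.restrict_univ, lintegral_indicator (MeasurableSet.univ.prod hE)]
        exact kap_min_snd n hn s hs hE hvol
      · refine tendsto_const_nhds.congr' ?_
        filter_upwards [hev p.1, hev p.2] with k hk hk2
        simp [hk, hk2]
    simpa using this
  obtain ⟨k, hk1, hk2⟩ := ((T1.eventually_lt_const hτ).and (T2.eventually_lt_const hτ)).exists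
  refine ⟨v k, 2 * ((k : ℝ) + 1), by positivity, hvm k,
    fun x => mul_nonneg (cutf_nonneg k x) (he0 x),
    fun x => mul_le_one₀ (cutf_le k x) (he0 x) (he1 x), fun x hx => ?_, hk2.le, hk1.le⟩
  simp [hv, cutf_zero hx]

theorem JJ_supp {V : Type*} [NormedAddCommGroup V] (n : ℕ) (s : ℝ) {U : Set (Sp n)}
    (hU : MeasurableSet U) {u : Sp n → V} (h : ∀ x, x ∉ U → u x = 0) :
    JJ n s univ u ≤ JJ n s (QQ U) u := by
  unfold JJ
  rw [Measure.restrict_univ, ← lintegral_add_compl _ (measurableSet_QQ hU)]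
  have : ∫⁻ p in (QQ U)ᶜ, ‖u p.1 - u p.2‖ₑ ∂(kap n s) = 0 := by
    refine setLIntegral_eq_zero (measurableSet_QQ hU).compl fun p hp => ?_
    have h1 : p.1 ∉ U := fun hh => hp (Or.inl hh)
    have h2 : p.2 ∉ U := fun hh => hp (Or.inr hh)
    simp [h _ h1, h _ h2]
  rw [this, add_zero]

theorem arith16 {τ : ℝ≥0∞} (hτ : 0 < τ) (hτt : τ < ⊤) :
    (τ / 32 + τ / 32) + (τ / 32 + τ / 32) < τ * 2⁻¹ := by
  refine lt_of_le_of_lt ?_ (small_arith hτ hτt)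
  have : τ / 32 + τ / 32 ≤ τ / 8 := by
    rw [← two_mul, ENNReal.div_eq_inv_mul, ENNReal.div_eq_inv_mul, ← mul_assoc]
    gcongr
    have : (32 : ℝ≥0∞) = 2 * 16 := by norm_num
    rw [this, ENNReal.mul_inv (by simp) (by simp), ← mul_assoc,
      ENNReal.mul_inv_cancel (by simp) (by simp), one_mul]
    exact ENNReal.inv_le_inv.2 (by norm_num)
  exact add_le_add this this

theorem stage_global (n : ℕ) (hn : 1 ≤ n) (s : ℝ) (hs : s ∈ Set.Ioo (0 : ℝ) 1) {E : Set (Sp n)}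
    (hE : MeasurableSet E) (hvol : volume E < ⊤) (hP : Ps n s E univ < ⊤) {τ : ℝ≥0∞}
    (hτ : 0 < τ) (hτt : τ < ⊤) :
    ∃ F : Set (Sp n), HasSmoothBoundary F ∧ IsBounded F ∧ MeasurableSet F ∧
      kap n s ((F ×ˢ Fᶜ) ∆ (E ×ˢ Eᶜ)) ≤ τ ∧ volume (F ∆ E) ≤ 2 * τ ∧
      kap n s (F ×ˢ Fᶜ) < ⊤ := by
  classical
  have hτ' : 0 < τ / 32 := ENNReal.div_pos hτ.ne' (by norm_num)
  obtain ⟨v, R, hR, hvm, hv0, hv1, hvR, hvJ, hvL⟩ := truncate n hn s hs hE hvol hP hτ'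
  set e : Sp n → ℝ := fun x => if x ∈ E then (1 : ℝ) else 0 with he
  have hem : Measurable e := Measurable.ite hE measurable_const measurable_const
  have hJe : JJ n s univ e < ⊤ := by
    have := JJ_ind n s hE MeasurableSet.univ hP
    rwa [QQ_univ] at this
  have h32 : τ / 32 < ⊤ := ENNReal.div_lt_top hτt.ne (by norm_num)
  have hJv : JJ n s univ v < ⊤ := by
    have h := JJ_add_le (n := n) (s := s) (S := univ) (u := fun x => v x - e x) (w := e)
      (hvm.sub hem)
    simp only [sub_add_cancel] at h
    exact lt_of_le_of_lt h (ENNReal.add_lt_top.2 ⟨lt_of_le_of_lt hvJ h32, hJe⟩)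
  obtain ⟨f, hf, h0, h1, hf0, -, hJ, hL⟩ := mollify n s (v := v) hvm hv0 hv1
    (C := univ) (U := univ) MeasurableSet.univ MeasurableSet.univ one_pos
    (fun x hx z hz => mem_univ _) (by rwa [QQ_univ])
    (B := ball 0 (R + 2)) isBounded_ball measurableSet_ball hτ' one_pos
  rw [QQ_univ] at hJ
  have hfm : Measurable f := hf.continuous.measurable
  have hfR : ∀ x, f x ≠ 0 → ‖x‖ < R + 1 := by
    intro x hx
    by_contra! hxR
    refine hx (hf0 x fun y hy => hvR y ?_)
    rw [mem_ball, dist_comm, dist_eq_norm] at hy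
    have := norm_sub_norm_le x y
    linarith
  have hJf : JJ n s univ f < ⊤ := by
    have h := JJ_add_le (n := n) (s := s) (S := univ) (u := fun x => f x - v x) (w := v)
      (hfm.sub hvm)
    simp only [sub_add_cancel] at h
    exact lt_of_le_of_lt h (ENNReal.add_lt_top.2 ⟨lt_of_le_of_lt hJ h32, hJv⟩)
  let ψ : ContDiffBump (0 : Sp n) := ⟨R + 2, R + 3, by linarith, by linarith⟩
  have hψc : ContDiff ℝ (⊤ : ℕ∞) ψ := ψ.contDiff
  have hJψ : JJ n s univ (fun x => ψ x • thet n x) < ⊤ := by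
    refine lt_of_le_of_lt (JJ_supp n s (U := ball 0 (R + 3)) measurableSet_ball
      fun x hx => ?_) (JJ_ball_lt_top n hn s hs
        ((ψ.contDiff (n := 1)).smul (thet_contDiff n 1)) (M := 1) (fun x => ?_) (R + 3))
    · have : ψ x = 0 := ψ.zero_of_le_dist (by simpa using hx)
      simp [this]
    · rw [Pi.smul_apply', norm_smul, Real.norm_eq_abs, abs_of_nonneg ψ.nonneg]
      exact mul_le_one₀ ψ.le_one (norm_nonneg _) (thet_norm_le n x)
  have hJfe : JJ n s univ (fun x => f x - e x) ≤ τ / 32 + τ / 32 := by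
    have h := JJ_add_le (n := n) (s := s) (S := univ) (u := fun x => f x - v x)
      (w := fun x => v x - e x) (hfm.sub hvm)
    simp only [sub_add_sub_cancel] at h
    exact h.trans (add_le_add hJ hvJ)
  have hLfe : ∫⁻ x in ball 0 (R + 2), ‖f x - e x‖ₑ ≤ τ / 32 + τ / 32 := by
    calc ∫⁻ x in ball 0 (R + 2), ‖f x - e x‖ₑ
        ≤ ∫⁻ x in ball 0 (R + 2), (‖f x - v x‖ₑ + ‖v x - e x‖ₑ) := by
          refine lintegral_mono fun x => ?_
          rw [← sub_add_sub_cancel (f x) (v x) (e x)]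
          exact enorm_add_le _ _
      _ = (∫⁻ x in ball 0 (R + 2), ‖f x - v x‖ₑ) + ∫⁻ x in ball 0 (R + 2), ‖v x - e x‖ₑ :=
          lintegral_add_left (hfm.sub hvm).enorm _
      _ ≤ _ := add_le_add hL ((setLIntegral_le_lintegral _ _).trans hvL)
  obtain ⟨F, hF1, hF2, hF3, -, hF5, hF6⟩ := stage_of_smooth n hn s hs hf h0 h1
    (ψ := ψ) hψc (fun x => ψ.nonneg) (fun x => ψ.le_one) (fun x hx => by
      refine ψ.eventuallyEq_one_of_mem_ball ?_
      rw [mem_ball, dist_zero_right]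
      exact (hfR x hx).trans (show R + 1 < R + 2 by linarith)) hE
    MeasurableSet.univ (B := ball 0 (R + 2)) measurableSet_ball isBounded_ball hJf hJψ
    (τ := τ) (lt_of_le_of_lt (add_le_add hJfe hLfe) (arith16 hτ hτt))
  have hFB : F ⊆ ball 0 (R + 2) := by
    intro x hx
    rw [mem_ball, dist_zero_right]
    linarith [hfR x (hF3 x hx)]
  have hEB : volume (E \ ball 0 (R + 2)) ≤ τ := by
    have h32' : τ / 32 ≤ τ := ENNReal.div_le_of_le_mul (le_mul_of_one_le_right zero_le (by norm_num))
    refine le_trans ?_ (hvL.trans h32')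
    rw [← lintegral_indicator_one (hE.diff measurableSet_ball)]
    refine lintegral_mono fun x => ?_
    by_cases hx : x ∈ E \ ball 0 (R + 2)
    · have hv0' : v x = 0 := by
        refine hvR x ?_
        have := hx.2
        rw [mem_ball, dist_zero_right, not_lt] at this
        linarith
      simp [hx.1, hv0', indicator_of_mem hx]
    · rw [indicator_of_notMem hx]
      exact zero_le
  refine ⟨F, hF1, isBounded_ball.subset hFB, hF2, ?_, ?_, ?_⟩
  · rw [inter_univ] at hF5
    exact le_self_add.trans hF5.le
  · calc volume (F ∆ E) ≤ volume (((F ∆ E) ∩ ball 0 (R + 2)) ∪ (E \ ball 0 (R + 2))) := by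
          refine measure_mono fun x hx => ?_
          by_cases hxB : x ∈ ball 0 (R + 2)
          · exact Or.inl ⟨hx, hxB⟩
          · rcases hx with hx | hx
            · exact absurd (hFB hx.1) hxB
            · exact Or.inr ⟨hx.1, hxB⟩
      _ ≤ volume ((F ∆ E) ∩ ball 0 (R + 2)) + volume (E \ ball 0 (R + 2)) := measure_union_le _ _
      _ ≤ τ + τ := add_le_add (le_add_self.trans hF5.le) hEB
      _ = 2 * τ := (two_mul τ).symm
  · obtain ⟨j, hj⟩ := exists_nat_ge (R + 2)
    refine lt_of_le_of_lt (measure_mono fun p hp => ?_) (hF6 j)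
    exact ⟨hp, Or.inl (ball_subset_ball hj (hFB hp.1))⟩

theorem part_two (n : ℕ) (hn : 1 ≤ n) (s : ℝ) (hs : s ∈ Set.Ioo (0 : ℝ) 1) {E : Set (Sp n)}
    (hE : MeasurableSet E) (hvol : volume E < ⊤) (hP : Ps n s E univ < ⊤) :
    ∃ Eh : ℕ → Set (Sp n),
        (∀ h, HasSmoothBoundary (Eh h) ∧ IsBounded (Eh h)) ∧
        LocConv n Eh E ∧
        (⨆ h, Ps n s (Eh h) Set.univ) < ⊤ ∧
        Tendsto (fun h => volume (Eh h ∆ E)) atTop (𝓝 0) ∧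
        Tendsto (fun h => Ps n s (Eh h) Set.univ) atTop (𝓝 (Ps n s E Set.univ)) := by
  choose F hF1 hF2 hF3 hF4 hF5 hF6 using fun m : ℕ => stage_global n hn s hs hE hvol hP
    (τ := ENNReal.ofReal (1 / ((m : ℝ) + 1))) (ENNReal.ofReal_pos.2 (by positivity))
    ENNReal.ofReal_lt_top
  have hT : Tendsto (fun h => volume (F h ∆ E)) atTop (𝓝 0) := by
    refine tendsto_of_tendsto_of_tendsto_of_le_of_le tendsto_const_nhds ?_
      (fun _ => zero_le) hF5
    simpa using ENNReal.Tendsto.const_mul tendsto_inv_enn (a := 2) (Or.inr (by simp))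
  have hPT : Tendsto (fun h => Ps n s (F h) Set.univ) atTop (𝓝 (Ps n s E Set.univ)) := by
    simp only [Ps_eq n s (hF3 _) MeasurableSet.univ]
    rw [Ps_eq n s hE MeasurableSet.univ] at hP ⊢
    refine tendsto_of_symmDiff s hP ?_
    refine tendsto_of_tendsto_of_tendsto_of_le_of_le tendsto_const_nhds tendsto_inv_enn
      (fun _ => zero_le) (fun m => (measure_mono inter_subset_left).trans (hF4 m))
  refine ⟨F, fun h => ⟨hF1 h, hF2 h⟩, ?_, ?_, hT, hPT⟩
  · intro K hK
    exact tendsto_of_tendsto_of_tendsto_of_le_of_le tendsto_const_nhds hT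
      (fun _ => zero_le) (fun m => measure_mono inter_subset_left)
  · refine iSup_lt_top_of_tendsto hP (fun h => ?_) hPT
    rw [Ps_eq n s (hF3 _) MeasurableSet.univ]
    exact lt_of_le_of_lt (measure_mono inter_subset_left) (hF6 h)

/-- Theorem 1.1: a set `E` has locally finite `s`-perimeter in an open set `Ω`
if and only if it can be approximated by smooth open sets as in the statement; moreover, when
`Ω = ℝⁿ`, `|E| < ∞` and `Pₛ(E) < ∞`, the approximating sets can be taken bounded, converging to
`E` in measure globally and with convergence of the global `s`-perimeters. -/
theorem approximation_by_smooth_sets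
    (n : ℕ) (hn : 1 ≤ n) (s : ℝ) (hs : s ∈ Set.Ioo (0 : ℝ) 1)
    (Ω : Set (EuclideanSpace ℝ (Fin n))) (hΩ : IsOpen Ω)
    (E : Set (EuclideanSpace ℝ (Fin n))) (hE : MeasurableSet E)
    (hEnorm : frontier E = mtBoundary E) :
    ((∀ Ω' : Set (EuclideanSpace ℝ (Fin n)), IsOpen Ω' → IsCompact (closure Ω') →
        closure Ω' ⊆ Ω → Ps n s E Ω' < ⊤)
      ↔ ∃ (Eh : ℕ → Set (EuclideanSpace ℝ (Fin n))) (ε : ℕ → ℝ),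
          (∀ h, HasSmoothBoundary (Eh h)) ∧
          (∀ h, 0 < ε h) ∧ Tendsto ε atTop (𝓝 0) ∧
          -- (i)
          LocConv n Eh E ∧
          (∀ Ω' : Set (EuclideanSpace ℝ (Fin n)), IsOpen Ω' → IsCompact (closure Ω') →
            closure Ω' ⊆ Ω → (⨆ h, Ps n s (Eh h) Ω') < ⊤) ∧
          -- (ii)
          (∀ Ω' : Set (EuclideanSpace ℝ (Fin n)), IsOpen Ω' → IsCompact (closure Ω') →
            closure Ω' ⊆ Ω →
            Tendsto (fun h => Ps n s (Eh h) Ω') atTop (𝓝 (Ps n s E Ω'))) ∧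
          -- (iii)
          (∀ h, frontier (Eh h) ⊆ Metric.thickening (ε h) (frontier E)))
    ∧
    (Ω = Set.univ → volume E < ⊤ → Ps n s E Set.univ < ⊤ →
      ∃ Eh : ℕ → Set (EuclideanSpace ℝ (Fin n)),
        (∀ h, HasSmoothBoundary (Eh h) ∧ IsBounded (Eh h)) ∧
        LocConv n Eh E ∧
        (⨆ h, Ps n s (Eh h) Set.univ) < ⊤ ∧
        Tendsto (fun h => volume (Eh h ∆ E)) atTop (𝓝 0) ∧
        Tendsto (fun h => Ps n s (Eh h) Set.univ) atTop (𝓝 (Ps n s E Set.univ))) := by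
  refine ⟨⟨fun hP => part_one_mp n hn s hs hΩ hE hP, ?_⟩,
    fun _ hvol hP => part_two n hn s hs hE hvol hP⟩
  rintro ⟨Eh, ε, -, -, -, -, hsup, hlim, -⟩ Ω' ho hc hsub
  refine lt_of_le_of_lt ?_ (hsup Ω' ho hc hsub)
  exact le_of_tendsto' (hlim Ω' ho hc hsub) fun h => le_iSup (fun h => Ps n s (Eh h) Ω') h
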